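/- arXiv:2512.09295 — 8 statements merged into one kernel-verified Lean document; each statement's English description precedes it below -/
import Mathlib

section
/- Let X be a real random variable, Z a standard Gaussian independent of X, σ > 0, and Y = X + σZ. Let h : ℝ → ℝ be continuously differentiable with E[h(Y)²] < ∞, E[|h'(Y)|] < ∞, and such that h(x+σz)·e^{-z²/2} → 0 as |z| → ∞ for each x (so that Gaussian integration by parts is valid). Then E[(Y + h(Y) − X)²] = σ² + E[h(Y)² + 2σ² h'(Y)]. -/
open MeasureTheory ProbabilityTheory Filter

lemma gauss_integrable_iff (f : ℝ → ℝ) :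
    Integrable f (gaussianReal 0 1) ↔ Integrable (fun z => f z * Real.exp (-z ^ 2 / 2)) := by
  rw [gaussianReal_of_var_ne_zero _ one_ne_zero, gaussianPDF_def,
    integrable_withDensity_iff (by fun_prop) (by simp)]
  have hc : IsUnit ((Real.sqrt (2 * Real.pi))⁻¹) := by
    rw [isUnit_iff_ne_zero]; positivity
  rw [← integrable_mul_const_iff hc (fun z => f z * Real.exp (-z ^ 2 / 2))]
  refine integrable_congr (Eventually.of_forall fun z => ?_)
  change f z * (ENNReal.ofReal (gaussianPDFReal 0 1 z)).toReal = _
  rw [ENNReal.toReal_ofReal (gaussianPDFReal_nonneg 0 1 z), gaussianPDFReal_def]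
  simp
  ring

lemma gauss_integral_eq (f : ℝ → ℝ) :
    ∫ z, f z ∂(gaussianReal 0 1)
      = (Real.sqrt (2 * Real.pi))⁻¹ * ∫ z, f z * Real.exp (-z ^ 2 / 2) := by
  rw [integral_gaussianReal_eq_integral_smul one_ne_zero, ← integral_const_mul]
  refine integral_congr_ae (Eventually.of_forall fun z => ?_)
  simp [gaussianPDFReal_def]
  ring

lemma stein_one (f f' : ℝ → ℝ) (hf : ∀ z, HasDerivAt f (f' z) z)
    (h1 : Integrable (fun z => z * f z) (gaussianReal 0 1))
    (h2 : Integrable f' (gaussianReal 0 1))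
    (hd : Tendsto (fun z : ℝ => f z * Real.exp (-z ^ 2 / 2)) (cocompact ℝ) (nhds 0)) :
    ∫ z, z * f z ∂(gaussianReal 0 1) = ∫ z, f' z ∂(gaussianReal 0 1) := by
  rw [gauss_integral_eq, gauss_integral_eq]
  rw [gauss_integrable_iff] at h1 h2
  congr 1
  have key := integral_of_hasDerivAt_of_tendsto
    (f := fun z : ℝ => f z * Real.exp (-z ^ 2 / 2))
    (f' := fun z => f' z * Real.exp (-z ^ 2 / 2) - z * f z * Real.exp (-z ^ 2 / 2))
    (m := 0) (n := 0) ?_ (h2.sub h1) (hd.mono_left atBot_le_cocompact)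
    (hd.mono_left atTop_le_cocompact)
  · rw [integral_sub h2 h1] at key
    linarith
  · intro z
    have he : HasDerivAt (fun z : ℝ => -z ^ 2 / 2) (-z) z := by
      refine ((hasDerivAt_pow 2 z).neg.div_const 2).congr_deriv ?_
      norm_num
      ring
    refine ((hf z).mul he.exp).congr_deriv ?_
    ring

/-- **Stein's unbiased risk estimate (SURE) identity.**
For `Y = X + σ Z` with `Z` standard Gaussian independent of `X`, and a continuously
differentiable denoising function `h` with `E[h(Y)²] < ∞`, `E[|h'(Y)|] < ∞` and Gaussian
decay at infinity, one has `E[(Y + h(Y) − X)²] = σ² + E[h(Y)² + 2σ² h'(Y)]`. -/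
theorem sure_identity
    {Ω : Type*} [MeasureSpace Ω] [IsProbabilityMeasure (ℙ : Measure Ω)]
    (X Z : Ω → ℝ) (hXm : Measurable X) (hZm : Measurable Z)
    (hZlaw : Measure.map Z ℙ = gaussianReal 0 1)
    (hXZ : IndepFun X Z ℙ)
    (σ : ℝ) (hσ : 0 < σ)
    (Y : Ω → ℝ) (hY : ∀ ω, Y ω = X ω + σ * Z ω)
    (h : ℝ → ℝ) (hC1 : ContDiff ℝ 1 h)
    (hint1 : Integrable (fun ω => h (Y ω) ^ 2) ℙ)
    (hint2 : Integrable (fun ω => |deriv h (Y ω)|) ℙ)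
    (hdecay : ∀ x : ℝ,
      Tendsto (fun z : ℝ => h (x + σ * z) * Real.exp (-z ^ 2 / 2)) (cocompact ℝ) (nhds 0)) :
    ∫ ω, (Y ω + h (Y ω) - X ω) ^ 2 ∂ℙ
      = σ ^ 2 + ∫ ω, (h (Y ω) ^ 2 + 2 * σ ^ 2 * deriv h (Y ω)) ∂ℙ := by
  obtain rfl : Y = fun ω => X ω + σ * Z ω := funext hY
  have hhm : Measurable h := hC1.continuous.measurable
  have hdm : Measurable (deriv h) := measurable_deriv h
  have hdiff : Differentiable ℝ h := hC1.differentiable one_ne_zero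
  have hZ2 : MemLp Z 2 ℙ := by
    have := memLp_id_gaussianReal' (μ := 0) (v := 1) 2 (by simp)
    rw [← hZlaw, memLp_map_measure_iff (by fun_prop) (by fun_prop)] at this
    exact this
  have hh2 : MemLp (fun ω => h (X ω + σ * Z ω)) 2 ℙ :=
    (memLp_two_iff_integrable_sq (by fun_prop)).2 hint1
  have hZsq : ∫ ω, Z ω ^ 2 ∂ℙ = 1 := by
    have hv := variance_fun_id_gaussianReal (μ := 0) (v := 1)
    rw [variance_eq_integral (by fun_prop)] at hv
    simp only [integral_id_gaussianReal, sub_zero, NNReal.coe_one] at hv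
    rw [← hZlaw, integral_map (by fun_prop) (by fun_prop)] at hv
    exact hv
  have hd1 : Integrable (fun ω => deriv h (X ω + σ * Z ω)) ℙ := by
    refine (integrable_norm_iff (by fun_prop)).1 ?_
    simpa only [Real.norm_eq_abs] using hint2
  have hZh : Integrable (fun ω => Z ω * h (X ω + σ * Z ω)) ℙ := hZ2.integrable_mul hh2
  have hmap : Measure.map (fun ω => (X ω, Z ω)) ℙ = (Measure.map X ℙ).prod (gaussianReal 0 1) := by
    rw [← hZlaw]
    exact (indepFun_iff_map_prod_eq_prod_map_map hXm.aemeasurable hZm.aemeasurable).1 hXZ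
  have : IsProbabilityMeasure (Measure.map X ℙ) :=
    Measure.isProbabilityMeasure_map hXm.aemeasurable
  have hpm : Measurable (fun ω => (X ω, Z ω)) := by fun_prop
  have hm1 : Measurable (fun p : ℝ × ℝ => p.2 * h (p.1 + σ * p.2)) := by fun_prop
  have hm2 : Measurable (fun p : ℝ × ℝ => σ * deriv h (p.1 + σ * p.2)) := by fun_prop
  have hP1 : Integrable (fun p : ℝ × ℝ => p.2 * h (p.1 + σ * p.2))
      ((Measure.map X ℙ).prod (gaussianReal 0 1)) := by
    rw [← hmap, integrable_map_measure hm1.aestronglyMeasurable hpm.aemeasurable]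
    exact hZh
  have hP2 : Integrable (fun p : ℝ × ℝ => σ * deriv h (p.1 + σ * p.2))
      ((Measure.map X ℙ).prod (gaussianReal 0 1)) := by
    rw [← hmap, integrable_map_measure hm2.aestronglyMeasurable hpm.aemeasurable]
    exact hd1.const_mul σ
  have stein : ∫ ω, Z ω * h (X ω + σ * Z ω) ∂ℙ = σ * ∫ ω, deriv h (X ω + σ * Z ω) ∂ℙ := by
    rw [← integral_const_mul]
    have e1 := integral_map (μ := ℙ) hpm.aemeasurable hm1.aestronglyMeasurable
    have e2 := integral_map (μ := ℙ) hpm.aemeasurable hm2.aestronglyMeasurable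
    rw [hmap] at e1 e2
    simp only at e1 e2
    rw [← e1, ← e2, integral_prod _ hP1, integral_prod _ hP2]
    refine integral_congr_ae ?_
    filter_upwards [hP1.prod_right_ae, hP2.prod_right_ae] with x hx1 hx2
    refine stein_one (fun z => h (x + σ * z)) (fun z => σ * deriv h (x + σ * z)) ?_ hx1 hx2
      (hdecay x)
    intro z
    have hi : HasDerivAt (fun z : ℝ => x + σ * z) σ z := by
      simpa using ((hasDerivAt_id z).const_mul σ).const_add x
    have := (hdiff (x + σ * z)).hasDerivAt.comp z hi
    rw [mul_comm]
    exact this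
  have hexp : (fun ω => (X ω + σ * Z ω + h (X ω + σ * Z ω) - X ω) ^ 2)
      = fun ω => (σ ^ 2 * Z ω ^ 2 + h (X ω + σ * Z ω) ^ 2)
        + 2 * σ * (Z ω * h (X ω + σ * Z ω)) := by
    funext ω; ring
  have iZ : Integrable (fun ω => σ ^ 2 * Z ω ^ 2) ℙ := hZ2.integrable_sq.const_mul _
  simp only at hint1 ⊢
  have iS : Integrable (fun ω => σ ^ 2 * Z ω ^ 2 + h (X ω + σ * Z ω) ^ 2) ℙ := iZ.add hint1
  rw [hexp, integral_add iS (hZh.const_mul _), integral_add iZ hint1,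
    integral_add hint1 (hd1.const_mul _), integral_const_mul, integral_const_mul,
    integral_const_mul, hZsq, stein]
  ring
end

section
/- Let X be a real random variable with distribution P, Z a standard Gaussian independent of X, σ > 0, and Y = X + σZ with distribution Q having a positive, continuously differentiable density q. Assume E[(q'(Y)/q(Y))²] < ∞ and that the integration-by-parts identities ∫ h'(y) q(y) dy = −∫ h(y) q'(y) dy hold for h(y) = σ² q'(y)/q(y) (boundary terms vanish). Then for the Bayes-optimal shrinkage h(y) = σ² q'(y)/q(y), the mean squared error satisfies E[(Y + h(Y) − X)²] = σ² − σ⁴ E[(q'(Y)/q(Y))²], which is strictly less than σ² whenever E[(q'(Y)/q(Y))²] > 0. -/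
open MeasureTheory ProbabilityTheory Filter

open scoped NNReal ENNReal

lemma aux_gauss_hasDerivAt (v : ℝ≥0) (hv : v ≠ 0) (u : ℝ) :
    HasDerivAt (gaussianPDFReal 0 v) (-(u / v) * gaussianPDFReal 0 v u) u := by
  have hv' : (v : ℝ) ≠ 0 := by exact_mod_cast hv
  rw [gaussianPDFReal_def]
  have h1 : HasDerivAt (fun x : ℝ => -(x - 0) ^ 2 / (2 * (v : ℝ))) (-(u / v)) u := by
    have := ((((hasDerivAt_id u).sub_const 0).pow 2).neg).div_const (2 * (v : ℝ))
    convert! this using 1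
    simp
    field_simp
  convert! (h1.exp).const_mul ((√(2 * Real.pi * v))⁻¹) using 1
  ring

lemma aux_gauss_bound (v : ℝ≥0) : ∀ u, gaussianPDFReal 0 v u ≤ (√(2 * Real.pi * v))⁻¹ := by
  intro u
  rw [gaussianPDFReal]
  have : Real.exp (-(u - 0) ^ 2 / (2 * v)) ≤ 1 := by
    rw [Real.exp_le_one_iff]
    apply div_nonpos_of_nonpos_of_nonneg
    · nlinarith [sq_nonneg (u - 0)]
    · positivity
  exact mul_le_of_le_one_right (by positivity) this

lemma aux_gauss_bound' (v : ℝ≥0) (hv : v ≠ 0) :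
    ∃ C, ∀ u, |-(u / v) * gaussianPDFReal 0 v u| ≤ C := by
  have hv' : (0 : ℝ) < v := by exact_mod_cast pos_iff_ne_zero.mpr hv
  refine ⟨(1 / 2 + v) * (√(2 * Real.pi * v))⁻¹ / v, fun u => ?_⟩
  rw [abs_mul, abs_of_nonneg (gaussianPDFReal_nonneg _ _ _), abs_neg, abs_div, abs_of_pos hv',
    gaussianPDFReal, div_mul_eq_mul_div]
  refine div_le_div_of_nonneg_right ?_ hv'.le
  have he : |u| * Real.exp (-(u - 0) ^ 2 / (2 * v)) ≤ 1 / 2 + v := by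
    have h1 := Real.add_one_le_exp (u ^ 2 / (2 * v))
    have e : -(u - 0) ^ 2 / (2 * (v : ℝ)) = -(u ^ 2 / (2 * v)) := by ring
    rw [e, Real.exp_neg, ← div_eq_mul_inv, div_le_iff₀ (Real.exp_pos _)]
    have h2 : |u| ≤ (1 / 2 + v) * (u ^ 2 / (2 * v) + 1) := by
      have : (1 / 2 + (v : ℝ)) * (u ^ 2 / (2 * v) + 1)
        = u ^ 2 / (4 * v) + u ^ 2 / 2 + 1 / 2 + v := by field_simp; ring
      rw [this]
      have h3 : 0 ≤ u ^ 2 / (4 * (v : ℝ)) := by positivity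
      nlinarith [sq_nonneg (|u| - 1), sq_abs u]
    exact h2.trans (by gcongr)
  calc _ = (|u| * Real.exp (-(u - 0) ^ 2 / (2 * v))) * (√(2 * Real.pi * v))⁻¹ := by ring
    _ ≤ _ := by gcongr

/-- the mixture density is differentiable -/
lemma aux_mix_hasDerivAt (P : Measure ℝ) [IsProbabilityMeasure P] (v : ℝ≥0) (hv : v ≠ 0) (y : ℝ) :
    HasDerivAt (fun y => ∫ x, gaussianPDFReal 0 v (y - x) ∂P)
      (∫ x, -((y - x) / v) * gaussianPDFReal 0 v (y - x) ∂P) y := by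
  obtain ⟨C, hC⟩ := aux_gauss_bound' v hv
  refine (hasDerivAt_integral_of_dominated_loc_of_deriv_le (s := Set.univ) (bound := fun _ => C)
    (F := fun y x => gaussianPDFReal 0 v (y - x))
    (F' := fun y x => -((y - x) / v) * gaussianPDFReal 0 v (y - x)) Filter.univ_mem
    ?_ ?_ ?_ ?_ ?_ ?_).2
  · exact Eventually.of_forall fun y => Measurable.aestronglyMeasurable (by fun_prop)
  · refine Integrable.of_bound (Measurable.aestronglyMeasurable (by fun_prop))
      ((√(2 * Real.pi * v))⁻¹) (Eventually.of_forall fun x => ?_)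
    rw [Real.norm_of_nonneg (gaussianPDFReal_nonneg _ _ _)]
    exact aux_gauss_bound v _
  · exact Measurable.aestronglyMeasurable (by fun_prop)
  · exact Eventually.of_forall fun x y _ => hC _
  · exact integrable_const C
  · exact Eventually.of_forall fun x y _ => (aux_gauss_hasDerivAt v hv (y - x)).comp_sub_const y x

lemma aux_joint {Ω : Type*} [MeasurableSpace Ω] (μ : Measure Ω) [IsProbabilityMeasure μ]
    (X W : Ω → ℝ) (hX : Measurable X) (hW : Measurable W) (v : ℝ≥0) (hv : v ≠ 0)
    (hlaw : μ.map W = gaussianReal 0 v) (hind : IndepFun X W μ) :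
    μ.map (fun ω => (X ω, X ω + W ω)) = ((μ.map X).prod volume).withDensity
      (fun p => ENNReal.ofReal (gaussianPDFReal 0 v (p.2 - p.1))) := by
  have hprod := (indepFun_iff_map_prod_eq_prod_map_map hX.aemeasurable hW.aemeasurable).1 hind
  have : IsProbabilityMeasure (μ.map X) := Measure.isProbabilityMeasure_map hX.aemeasurable
  refine Measure.ext_of_lintegral _ fun f hf => ?_
  rw [lintegral_map hf (by fun_prop), lintegral_withDensity_eq_lintegral_mul _ (by fun_prop) hf,
    lintegral_prod _ (by fun_prop)]
  have h1 : ∫⁻ ω, f (X ω, X ω + W ω) ∂μ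
      = ∫⁻ p, f (p.1, p.1 + p.2) ∂(μ.map (fun ω => (X ω, W ω))) := by
    rw [lintegral_map (by fun_prop) (by fun_prop)]
  rw [h1, hprod, lintegral_prod _ (by fun_prop), hlaw]
  refine lintegral_congr fun x => ?_
  rw [gaussianReal_of_var_ne_zero _ hv,
    lintegral_withDensity_eq_lintegral_mul _ (measurable_gaussianPDF _ _) (by fun_prop)]
  rw [← lintegral_add_left_eq_self (μ := (volume : Measure ℝ))
    (fun y => ((fun p : ℝ × ℝ => ENNReal.ofReal (gaussianPDFReal 0 v (p.2 - p.1))) * f) (x, y)) x]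
  refine lintegral_congr fun w => ?_
  simp [gaussianPDF]

lemma aux_density {Ω : Type*} [MeasurableSpace Ω] (μ : Measure Ω) [IsProbabilityMeasure μ]
    (X W : Ω → ℝ) (hX : Measurable X) (hW : Measurable W) (v : ℝ≥0) (hv : v ≠ 0)
    (hlaw : μ.map W = gaussianReal 0 v) (hind : IndepFun X W μ)
    (q : ℝ → ℝ) (hq : ∀ y, 0 < q y) (hqc : Continuous q)
    (hQ : μ.map (fun ω => X ω + W ω) = volume.withDensity fun y => ENNReal.ofReal (q y)) :
    q = fun y => ∫ x, gaussianPDFReal 0 v (y - x) ∂(μ.map X) := by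
  have : IsProbabilityMeasure (μ.map X) := Measure.isProbabilityMeasure_map hX.aemeasurable
  set G : ℝ → ℝ := fun y => ∫ x, gaussianPDFReal 0 v (y - x) ∂(μ.map X) with hG
  have hGc : Continuous G := continuous_iff_continuousAt.2 fun y =>
    (aux_mix_hasDerivAt (μ.map X) v hv y).continuousAt
  have hG0 : ∀ y, 0 ≤ G y := fun y => integral_nonneg fun x => gaussianPDFReal_nonneg _ _ _
  have hGl : ∀ y, ENNReal.ofReal (G y)
      = ∫⁻ x, ENNReal.ofReal (gaussianPDFReal 0 v (y - x)) ∂(μ.map X) := fun y => by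
    refine ofReal_integral_eq_lintegral_ofReal ?_
      (Eventually.of_forall fun x => gaussianPDFReal_nonneg _ _ _)
    refine Integrable.of_bound (Measurable.aestronglyMeasurable (by fun_prop))
      ((√(2 * Real.pi * v))⁻¹) (Eventually.of_forall fun x => ?_)
    rw [Real.norm_of_nonneg (gaussianPDFReal_nonneg _ _ _)]
    exact aux_gauss_bound v _
  have hm : μ.map (fun ω => X ω + W ω) = volume.withDensity fun y => ENNReal.ofReal (G y) := by
    refine Measure.ext_of_lintegral _ fun f hf => ?_
    have h1 : ∫⁻ y, f y ∂(μ.map (fun ω => X ω + W ω))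
        = ∫⁻ p, f p.2 ∂(μ.map (fun ω => (X ω, X ω + W ω))) := by
      rw [lintegral_map (by fun_prop) (by fun_prop), lintegral_map (by fun_prop) (by fun_prop)]
    rw [h1, aux_joint μ X W hX hW v hv hlaw hind,
      lintegral_withDensity_eq_lintegral_mul _ (by fun_prop) (by fun_prop),
      lintegral_prod_symm' _ (by fun_prop),
      lintegral_withDensity_eq_lintegral_mul _ (by fun_prop) hf]
    refine lintegral_congr fun y => ?_
    simp only [Pi.mul_apply]
    rw [lintegral_mul_const _ (by fun_prop), hGl]
  rw [hQ] at hm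
  have hae := (withDensity_eq_iff_of_sigmaFinite (by fun_prop) (by fun_prop)).1 hm
  refine (hqc.ae_eq_iff_eq volume hGc).1 ?_
  filter_upwards [hae] with y hy
  rwa [ENNReal.ofReal_eq_ofReal_iff (hq y).le (hG0 y)] at hy

/-- Tweedie, in integrated form. -/
lemma aux_tweedie {Ω : Type*} [MeasurableSpace Ω] (μ : Measure Ω) [IsProbabilityMeasure μ]
    (X W : Ω → ℝ) (hX : Measurable X) (hW : Measurable W) (v : ℝ≥0) (hv : v ≠ 0)
    (hlaw : μ.map W = gaussianReal 0 v) (hind : IndepFun X W μ)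
    (q : ℝ → ℝ) (hq : ∀ y, 0 < q y) (hqc : Continuous q)
    (hQ : μ.map (fun ω => X ω + W ω) = volume.withDensity fun y => ENNReal.ofReal (q y))
    (g : ℝ → ℝ) (hg : Measurable g) (hint : Integrable (fun ω => W ω * g (X ω + W ω)) μ) :
    ∫ ω, W ω * g (X ω + W ω) ∂μ = - (v * ∫ y, g y * deriv q y) := by
  have : IsProbabilityMeasure (μ.map X) := Measure.isProbabilityMeasure_map hX.aemeasurable
  have hv' : (v : ℝ) ≠ 0 := by exact_mod_cast hv
  have hqG := aux_density μ X W hX hW v hv hlaw hind q hq hqc hQ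
  have hderiv : ∀ y, deriv q y
      = ∫ x, -((y - x) / v) * gaussianPDFReal 0 v (y - x) ∂(μ.map X) := fun y => by
    rw [hqG]; exact (aux_mix_hasDerivAt _ v hv y).deriv
  have hJ := aux_joint μ X W hX hW v hv hlaw hind
  have hm : Measurable (fun p : ℝ × ℝ => (p.2 - p.1) * g p.2) := by fun_prop
  have hmap : ∫ ω, W ω * g (X ω + W ω) ∂μ
      = ∫ p, (p.2 - p.1) * g p.2 ∂(μ.map (fun ω => (X ω, X ω + W ω))) := by
    rw [integral_map (by fun_prop) hm.aestronglyMeasurable]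
    simp
  have hint2 : Integrable (fun p : ℝ × ℝ => (p.2 - p.1) * g p.2)
      (μ.map (fun ω => (X ω, X ω + W ω))) := by
    rw [integrable_map_measure hm.aestronglyMeasurable (by fun_prop)]
    simpa [Function.comp_def] using hint
  rw [hJ, integrable_withDensity_iff_integrable_smul' (by fun_prop) (by simp)] at hint2
  rw [hmap, hJ, integral_withDensity_eq_integral_toReal_smul (by fun_prop) (by simp),
    integral_prod_symm _ hint2, ← integral_const_mul, ← integral_neg]
  refine integral_congr_ae (Eventually.of_forall fun y => ?_)
  simp only [hderiv, smul_eq_mul]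
  rw [← integral_const_mul, ← integral_const_mul, ← integral_neg]
  refine integral_congr_ae (Eventually.of_forall fun x => ?_)
  simp only
  rw [ENNReal.toReal_ofReal (gaussianPDFReal_nonneg _ _ _)]
  field_simp

/-- **Bayes-optimal shrinkage beats the trivial denoiser in MSE.**
For `Y = X + σ Z` with density `q`, the shrinkage `h(y) = σ² q'(y)/q(y)` achieves
`E[(Y + h(Y) − X)²] = σ² − σ⁴ E[(q'(Y)/q(Y))²] < σ²` whenever `E[(q'(Y)/q(Y))²] > 0`. -/
theorem bayes_shrinkage_mse
    {Ω : Type*} [MeasureSpace Ω] [IsProbabilityMeasure (ℙ : Measure Ω)]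
    (X Z : Ω → ℝ) (hXm : Measurable X) (hZm : Measurable Z)
    (hZlaw : Measure.map Z ℙ = gaussianReal 0 1)
    (hXZ : IndepFun X Z ℙ)
    (σ : ℝ) (hσ : 0 < σ)
    (Y : Ω → ℝ) (hY : ∀ ω, Y ω = X ω + σ * Z ω)
    (q : ℝ → ℝ) (hqpos : ∀ y, 0 < q y) (hqC1 : ContDiff ℝ 1 q)
    (hQ : Measure.map Y ℙ = volume.withDensity fun y => ENNReal.ofReal (q y))
    (hscoreInt : Integrable (fun ω => (deriv q (Y ω) / q (Y ω)) ^ 2) ℙ)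
    (h : ℝ → ℝ) (hdef : ∀ y, h y = σ ^ 2 * (deriv q y / q y))
    (hIBP : ∫ y, deriv h y * q y = -∫ y, h y * deriv q y) :
    (∫ ω, (Y ω + h (Y ω) - X ω) ^ 2 ∂ℙ
        = σ ^ 2 - σ ^ 4 * ∫ ω, (deriv q (Y ω) / q (Y ω)) ^ 2 ∂ℙ)
    ∧ (0 < ∫ ω, (deriv q (Y ω) / q (Y ω)) ^ 2 ∂ℙ →
        ∫ ω, (Y ω + h (Y ω) - X ω) ^ 2 ∂ℙ < σ ^ 2) := by
  have hYm : Measurable Y := by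
    have : Y = fun ω => X ω + σ * Z ω := funext hY
    rw [this]; fun_prop
  have hdq : Continuous (deriv q) := hqC1.continuous_deriv le_rfl
  have hqc : Continuous q := hqC1.continuous
  have hh : Measurable h := by
    have : h = fun y => σ ^ 2 * (deriv q y / q y) := funext hdef
    rw [this]
    have := hdq.measurable
    have := hqc.measurable
    fun_prop
  set W : Ω → ℝ := fun ω => σ * Z ω with hW
  have hWm : Measurable W := by fun_prop
  set v : ℝ≥0 := ⟨σ ^ 2, sq_nonneg σ⟩ with hvdef
  have hvσ : (v : ℝ) = σ ^ 2 := rfl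
  have hv : v ≠ 0 := by
    intro h0
    have : (v : ℝ) = 0 := by rw [h0]; rfl
    rw [hvσ] at this
    exact (pow_pos hσ 2).ne' this
  have hYW : Y = fun ω => X ω + W ω := funext hY
  have hlaw : Measure.map W ℙ = gaussianReal 0 v := by
    have : W = (fun z => σ * z) ∘ Z := rfl
    rw [this, ← Measure.map_map (by fun_prop) hZm, hZlaw, gaussianReal_map_const_mul]
    congr 1
    · simp
    · ext; simp [hvσ]
  have hind : IndepFun X W ℙ := hXZ.comp (φ := id) (ψ := fun z => σ * z) measurable_id (by fun_prop)
  have hhY : MemLp (fun ω => h (Y ω)) 2 ℙ := by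
    rw [memLp_two_iff_integrable_sq
      (f := fun ω => h (Y ω))
      (hh.comp hYm).aestronglyMeasurable]
    refine (hscoreInt.const_mul (σ ^ 4)).congr (Eventually.of_forall fun ω => ?_)
    simp only [hdef]; ring
  have hWL : MemLp W 2 ℙ := by
    have := memLp_id_gaussianReal' (μ := 0) (v := v) 2 (by simp)
    rw [← hlaw, memLp_map_measure_iff (by fun_prop) (by fun_prop)] at this
    exact this
  have hW2 : ∫ ω, W ω ^ 2 ∂ℙ = σ ^ 2 := by
    have h1 := variance_fun_id_gaussianReal (μ := 0) (v := v)
    rw [variance_eq_integral measurable_id'.aemeasurable] at h1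
    simp only [integral_id_gaussianReal, sub_zero] at h1
    rw [← hlaw, integral_map hWm.aemeasurable (by fun_prop)] at h1
    exact h1
  have hWh : Integrable (fun ω => W ω * h (Y ω)) ℙ := hWL.integrable_mul hhY
  have hQ' := hQ
  rw [hYW] at hQ'
  have hT := aux_tweedie ℙ X W hXm hWm v hv hlaw hind q hqpos hqc hQ' h hh
    (by simpa only [hYW] using hWh)
  have hh2 : ∫ ω, h (Y ω) ^ 2 ∂ℙ = σ ^ 4 * ∫ ω, (deriv q (Y ω) / q (Y ω)) ^ 2 ∂ℙ := by
    rw [← integral_const_mul]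
    refine integral_congr_ae (Eventually.of_forall fun ω => ?_)
    simp only [hdef]; ring
  have hh3 : ∫ ω, h (Y ω) ^ 2 ∂ℙ = σ ^ 2 * ∫ y, h y * deriv q y := by
    have : ∫ ω, h (Y ω) ^ 2 ∂ℙ = ∫ y, h y ^ 2 ∂(Measure.map Y ℙ) := by
      rw [integral_map hYm.aemeasurable (by fun_prop)]
    rw [this, hQ, integral_withDensity_eq_integral_toReal_smul (by fun_prop) (by simp),
      ← integral_const_mul]
    refine integral_congr_ae (Eventually.of_forall fun y => ?_)
    have hy := (hqpos y).ne'
    simp only [smul_eq_mul]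
    rw [ENNReal.toReal_ofReal (hqpos y).le, hdef]
    field_simp
  have hT' : ∫ ω, W ω * h (Y ω) ∂ℙ = - ∫ ω, h (Y ω) ^ 2 ∂ℙ := by
    rw [hh3, ← hvσ, ← hT, hYW]
  have hmain : ∫ ω, (Y ω + h (Y ω) - X ω) ^ 2 ∂ℙ
      = σ ^ 2 - σ ^ 4 * ∫ ω, (deriv q (Y ω) / q (Y ω)) ^ 2 ∂ℙ := by
    have e : ∀ ω, (Y ω + h (Y ω) - X ω) ^ 2
        = (W ω ^ 2 + 2 * (W ω * h (Y ω))) + h (Y ω) ^ 2 := fun ω => by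
      have : Y ω - X ω = W ω := by rw [hY]; simp [hW]
      rw [← this]; ring
    simp_rw [e]
    rw [integral_add (f := fun ω => W ω ^ 2 + 2 * (W ω * h (Y ω)))
      (hWL.integrable_sq.add (hWh.const_mul 2)) hhY.integrable_sq,
      integral_add hWL.integrable_sq (hWh.const_mul 2), integral_const_mul, hT', hW2, ← hh2]
    ring
  refine ⟨hmain, fun hpos => ?_⟩
  rw [hmain]
  have : 0 < σ ^ 4 := by positivity
  nlinarith [mul_pos this hpos]
end

section
/- Consider the additive Gaussian model Y = X + σZ with η = σ²/2, and let F, G be the cumulative distribution functions of X and Y respectively. Assume F is infinitely differentiable and, for the given y ∈ ℝ, the series Σ_{l≥0} (σ^{2l} E[Z^{2l}]/(2l)!) |F^{(2l)}(y)| converges and the Taylor series of F at y converges to F on all of ℝ (justifying term-by-term integration against the Gaussian density). Then G(y) = Σ_{k=0}^∞ (η^k / k!) · F^{(2k)}(y). -/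
open MeasureTheory ProbabilityTheory Filter

open scoped Nat in
/-- Even moments of the standard Gaussian. -/
lemma gaussian_even_moment (l : ℕ) :
    ∫ x, x ^ (2 * l) ∂(gaussianReal 0 1) = ((2 * l).factorial : ℝ) / (2 ^ l * l.factorial) := by
  rw [integral_gaussianReal_eq_integral_smul (by norm_num)]
  have h1 : ∀ x : ℝ, gaussianPDFReal 0 1 x • x ^ (2 * l)
      = (√(2 * Real.pi))⁻¹ * (|x| ^ ((2 * l : ℕ) : ℝ) * Real.exp (-(1 / 2) * |x| ^ (2 : ℝ))) := by
    intro x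
    have e1 : |x| ^ ((2 * l : ℕ) : ℝ) = x ^ (2 * l) := by
      rw [Real.rpow_natCast, pow_mul, pow_mul, sq_abs]
    have e2 : |x| ^ (2 : ℝ) = x ^ 2 := by
      rw [Real.rpow_two, sq_abs]
    rw [e1, e2, gaussianPDFReal, smul_eq_mul]
    have : -(x - 0) ^ 2 / (2 * ((1 : NNReal) : ℝ)) = -(1 / 2) * x ^ 2 := by
      push_cast; ring
    rw [this]
    simp only [NNReal.coe_one, mul_one]
    ring
  simp_rw [h1]
  rw [integral_const_mul,
    integral_comp_abs (f := fun x : ℝ => x ^ ((2 * l : ℕ) : ℝ) * Real.exp (-(1 / 2) * x ^ (2 : ℝ))),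
    integral_rpow_mul_exp_neg_mul_rpow (by norm_num)
      (by have : (0 : ℝ) ≤ ((2 * l : ℕ) : ℝ) := Nat.cast_nonneg _
          linarith) (by norm_num)]
  have e3 : (((2 * l : ℕ) : ℝ) + 1) / 2 = l + 1 / 2 := by push_cast; ring
  have e4 : (1 / 2 : ℝ) ^ (-(((2 * l : ℕ) : ℝ) + 1) / 2) = 2 ^ l * √2 := by
    rw [neg_div, e3, one_div, Real.inv_rpow (by norm_num), Real.rpow_neg (by norm_num), inv_inv,
      Real.rpow_add (by norm_num), Real.rpow_natCast, Real.sqrt_eq_rpow, one_div]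
  have e5 : ((2 * l).factorial : ℝ) = 2 ^ l * l.factorial * ((2 * l - 1 : ℕ)‼ : ℝ) := by
    rcases l with _ | m
    · simp
    · have h := Nat.factorial_eq_mul_doubleFactorial (2 * m + 1)
      have h' := Nat.doubleFactorial_two_mul (m + 1)
      have h2 : 2 * (m + 1) - 1 = 2 * m + 1 := by omega
      rw [h2]
      have h3 : 2 * (m + 1) = 2 * m + 1 + 1 := by ring
      rw [← h3, h'] at h
      rw [h]; push_cast; ring
  rw [e3, e4, e5, Real.Gamma_nat_add_half, Real.sqrt_mul (by norm_num)]
  have : √Real.pi ≠ 0 := (Real.sqrt_pos.2 Real.pi_pos).ne'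
  have : √(2 : ℝ) ≠ 0 := (Real.sqrt_pos.2 two_pos).ne'
  have : (l.factorial : ℝ) ≠ 0 := by positivity
  field_simp

/-- The cdf of `X + σ Z` as a Gaussian average of the cdf of `X`. -/
lemma cdf_conv {Ω : Type*} [MeasureSpace Ω] [IsProbabilityMeasure (ℙ : Measure Ω)]
    (X Z : Ω → ℝ) (hXm : Measurable X) (hZm : Measurable Z)
    (hZlaw : Measure.map Z ℙ = gaussianReal 0 1) (hXZ : IndepFun X Z ℙ) (σ y : ℝ)
    (Y : Ω → ℝ) (hY : ∀ ω, Y ω = X ω + σ * Z ω) (F : ℝ → ℝ) (hFm : Measurable F)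
    (hF : ∀ x, F x = (Measure.map X ℙ (Set.Iic x)).toReal) :
    (Measure.map Y ℙ (Set.Iic y)).toReal = ∫ z, F (y - σ * z) ∂(gaussianReal 0 1) := by
  have : IsProbabilityMeasure (Measure.map X ℙ) := Measure.isProbabilityMeasure_map hXm.aemeasurable
  have hYe : Y = (fun p : ℝ × ℝ => p.2 + σ * p.1) ∘ (fun ω => (Z ω, X ω)) := funext hY
  have hm : Measurable (fun p : ℝ × ℝ => p.2 + σ * p.1) := by fun_prop
  have hprod := (indepFun_iff_map_prod_eq_prod_map_map hZm.aemeasurable hXm.aemeasurable).1 hXZ.symm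
  rw [hYe, ← Measure.map_map hm (hZm.prodMk hXm), hprod, hZlaw,
    Measure.map_apply hm measurableSet_Iic, Measure.prod_apply (hm measurableSet_Iic)]
  have hs : ∀ z : ℝ, (Measure.map X ℙ)
      (Prod.mk z ⁻¹' ((fun p : ℝ × ℝ => p.2 + σ * p.1) ⁻¹' Set.Iic y))
      = ENNReal.ofReal (F (y - σ * z)) := by
    intro z
    rw [hF, ENNReal.ofReal_toReal (measure_ne_top _ _)]
    congr 1
    ext x
    simp [le_sub_iff_add_le]
  simp_rw [hs]
  rw [integral_eq_lintegral_of_nonneg_ae]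
  · exact Filter.Eventually.of_forall fun z => by
      simp only [Pi.zero_apply]; rw [hF]; exact ENNReal.toReal_nonneg
  · exact (hFm.comp (by fun_prop)).aestronglyMeasurable

/-- Pointwise rewriting of the terms of a convergent series. -/
lemma hasSum_terms_congr {f g : ℕ → ℝ} {a : ℝ} (hf : HasSum f a) (h : ∀ l, g l = f l) :
    HasSum g a := by
  rw [funext h]; exact hf

/-- Even part of a power series. -/
lemma even_part_hasSum (a : ℕ → ℝ) (t A B : ℝ) (h1 : HasSum (fun j => a j * t ^ j) A)
    (h2 : HasSum (fun j => a j * (-t) ^ j) B) :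
    HasSum (fun l => a (2 * l) * t ^ (2 * l)) ((A + B) / 2) := by
  have h := (h1.add h2).div_const 2
  have hinj : Function.Injective (fun l : ℕ => 2 * l) := fun m n h => by
    simpa using h
  rw [← hinj.hasSum_iff] at h
  · refine hasSum_terms_congr h fun l => ?_
    simp [pow_mul]
  · intro j hj
    have : Odd j := by
      rw [← Nat.not_even_iff_odd]
      rintro ⟨m, hm⟩
      exact hj ⟨m, by simp only; omega⟩
    rw [this.neg_pow]; ring

/-- **G-in-F series expansion.**
In the additive Gaussian model `Y = X + σZ` with `η = σ²/2` and cdfs `F, G` of `X, Y`: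
if `F` is infinitely differentiable, the series
`Σ_l (σ^{2l} E[Z^{2l}]/(2l)!)|F^{(2l)}(y)|` converges, and the Taylor series of `F` at `y`
converges to `F` on all of `ℝ`, then `G(y) = Σ_{k≥0} (η^k/k!) F^{(2k)}(y)`. -/
theorem G_series_in_F
    {Ω : Type*} [MeasureSpace Ω] [IsProbabilityMeasure (ℙ : Measure Ω)]
    (X Z : Ω → ℝ) (hXm : Measurable X) (hZm : Measurable Z)
    (hZlaw : Measure.map Z ℙ = gaussianReal 0 1)
    (hXZ : IndepFun X Z ℙ)
    (σ : ℝ) (hσ : 0 < σ) (η : ℝ) (hη : η = σ ^ 2 / 2)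
    (Y : Ω → ℝ) (hY : ∀ ω, Y ω = X ω + σ * Z ω)
    (F G : ℝ → ℝ)
    (hF : ∀ x, F x = (Measure.map X ℙ (Set.Iic x)).toReal)
    (hG : ∀ x, G x = (Measure.map Y ℙ (Set.Iic x)).toReal)
    (hFsmooth : ContDiff ℝ (⊤ : ℕ∞) F)
    (y : ℝ)
    (hconv : Summable fun l : ℕ =>
      σ ^ (2 * l) * (∫ ω, Z ω ^ (2 * l) ∂ℙ) / ((2 * l).factorial : ℝ) *
        |iteratedDeriv (2 * l) F y|)
    (htaylor : ∀ x : ℝ,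
      HasSum (fun j : ℕ => iteratedDeriv j F y / (j.factorial : ℝ) * (x - y) ^ j) (F x)) :
    HasSum (fun k : ℕ => η ^ k / (k.factorial : ℝ) * iteratedDeriv (2 * k) F y) (G y) := by
  have hFc : Continuous F := hFsmooth.continuous
  have : IsProbabilityMeasure (Measure.map X ℙ) := Measure.isProbabilityMeasure_map hXm.aemeasurable
  have hFb : ∀ x, ‖F x‖ ≤ 1 := fun x => by
    rw [hF, Real.norm_of_nonneg ENNReal.toReal_nonneg]
    exact measureReal_le_one
  have hint : ∀ c : ℝ, Integrable (fun z => F (y + c * z)) (gaussianReal 0 1) := fun c =>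
    Integrable.of_bound (hFc.comp (by fun_prop)).aestronglyMeasurable 1
      (Filter.Eventually.of_forall fun z => hFb _)
  have hG1 : G y = ∫ z, F (y + -σ * z) ∂(gaussianReal 0 1) := by
    rw [hG, cdf_conv X Z hXm hZm hZlaw hXZ σ y Y hY F hFc.measurable hF]
    congr 1; ext z; congr 1; ring
  have hG2 : G y = ∫ z, F (y + σ * z) ∂(gaussianReal 0 1) := by
    rw [hG1]
    have hn : (gaussianReal 0 1).map (fun x => -x) = gaussianReal 0 1 := by
      rw [gaussianReal_map_neg, neg_zero]
    conv_rhs => rw [← hn]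
    rw [integral_map (by fun_prop) (Continuous.aestronglyMeasurable (by fun_prop))]
    congr 1; ext z; congr 1; ring
  have hG3 : G y = ∫ z, (F (y + σ * z) + F (y + -σ * z)) / 2 ∂(gaussianReal 0 1) := by
    rw [integral_div, integral_add (hint _) (hint _), ← hG1, ← hG2]; ring
  have hmom : ∀ l : ℕ, ∫ ω, Z ω ^ (2 * l) ∂ℙ
      = ((2 * l).factorial : ℝ) / (2 ^ l * l.factorial) := by
    intro l
    rw [← gaussian_even_moment, ← hZlaw, integral_map hZm.aemeasurable (by fun_prop)]
  have hpowint : ∀ n : ℕ, Integrable (fun z : ℝ => z ^ n) (gaussianReal 0 1) := by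
    intro n
    rcases Nat.eq_zero_or_pos n with rfl | hn
    · simp
    · have h := (memLp_id_gaussianReal (μ := 0) (v := 1) n).integrable_norm_pow hn.ne'
      refine (integrable_norm_iff (by fun_prop)).1 ?_
      simpa using h
  have hser : ∀ z : ℝ, HasSum (fun l : ℕ =>
      iteratedDeriv (2 * l) F y / ((2 * l).factorial : ℝ) * (σ * z) ^ (2 * l))
      ((F (y + σ * z) + F (y + -σ * z)) / 2) := by
    intro z
    refine even_part_hasSum (fun j => iteratedDeriv j F y / (j.factorial : ℝ)) (σ * z) _ _ ?_ ?_
    · simpa using htaylor (y + σ * z)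
    · simpa using htaylor (y + -σ * z)
  have key := hasSum_integral_of_summable_integral_norm (μ := gaussianReal 0 1)
    (F := fun (l : ℕ) (z : ℝ) =>
      iteratedDeriv (2 * l) F y / ((2 * l).factorial : ℝ) * (σ * z) ^ (2 * l))
    (fun l => by
      simp_rw [mul_pow]
      exact ((hpowint _).const_mul _).const_mul _)
    (by
      refine hconv.congr fun l => ?_
      have : ∀ z : ℝ, ‖iteratedDeriv (2 * l) F y / ((2 * l).factorial : ℝ) * (σ * z) ^ (2 * l)‖
          = (|iteratedDeriv (2 * l) F y| / ((2 * l).factorial : ℝ) * σ ^ (2 * l)) * z ^ (2 * l) := by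
        intro z
        rw [norm_mul, norm_div, Real.norm_eq_abs, Real.norm_natCast,
          Real.norm_of_nonneg ((even_two_mul l).pow_nonneg _), mul_pow]
        ring
      simp_rw [this]
      rw [integral_const_mul, gaussian_even_moment, hmom]
      ring)
  simp_rw [fun z => (hser z).tsum_eq] at key
  rw [← hG3] at key
  refine hasSum_terms_congr key fun l => ?_
  simp_rw [mul_pow]
  rw [integral_const_mul, integral_const_mul, gaussian_even_moment, hη, pow_mul, div_pow]
  have : ((2 * l).factorial : ℝ) ≠ 0 := by positivity
  field_simp
end

section
/- Consider the additive Gaussian model Y = X + σZ with η = σ²/2, and let F, G be the cumulative distribution functions of X and Y respectively. Assume F is infinitely differentiable and that for the given y ∈ ℝ the double series Σ_{k≥0} Σ_{l≥0} (η^{k+l}/(k! l!)) |F^{(2k+2l)}(y)| converges absolutely (so that G^{(2k)}(y) = Σ_{l≥0} (η^l/l!) F^{(2k+2l)}(y) for every k and rearrangement is justified). Then F(y) = Σ_{k=0}^∞ ((−η)^k / k!) · G^{(2k)}(y). -/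
open MeasureTheory ProbabilityTheory Filter

/-- **F-in-G series expansion.**
In the additive Gaussian model `Y = X + σZ` with `η = σ²/2` and cdfs `F, G` of `X, Y`:
if `F` is infinitely differentiable and the double series
`Σ_{k,l} (η^{k+l}/(k! l!)) |F^{(2k+2l)}(y)|` converges absolutely (so that
`G^{(2k)}(y) = Σ_l (η^l/l!) F^{(2k+2l)}(y)` for every `k` and rearrangement is justified),
then `F(y) = Σ_{k≥0} ((−η)^k/k!) G^{(2k)}(y)`. -/
theorem F_series_in_G
    {Ω : Type*} [MeasureSpace Ω] [IsProbabilityMeasure (ℙ : Measure Ω)]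
    (X Z : Ω → ℝ) (hXm : Measurable X) (hZm : Measurable Z)
    (hZlaw : Measure.map Z ℙ = gaussianReal 0 1)
    (hXZ : IndepFun X Z ℙ)
    (σ : ℝ) (hσ : 0 < σ) (η : ℝ) (hη : η = σ ^ 2 / 2)
    (Y : Ω → ℝ) (hY : ∀ ω, Y ω = X ω + σ * Z ω)
    (F G : ℝ → ℝ)
    (hF : ∀ x, F x = (Measure.map X ℙ (Set.Iic x)).toReal)
    (hG : ∀ x, G x = (Measure.map Y ℙ (Set.Iic x)).toReal)
    (hFsmooth : ContDiff ℝ (⊤ : ℕ∞) F)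
    (y : ℝ)
    (hconv : Summable fun kl : ℕ × ℕ =>
      η ^ (kl.1 + kl.2) / ((kl.1.factorial : ℝ) * (kl.2.factorial : ℝ)) *
        |iteratedDeriv (2 * kl.1 + 2 * kl.2) F y|)
    (hGderiv : ∀ k : ℕ,
      HasSum (fun l : ℕ => η ^ l / (l.factorial : ℝ) * iteratedDeriv (2 * k + 2 * l) F y)
        (iteratedDeriv (2 * k) G y)) :
    HasSum (fun k : ℕ => (-η) ^ k / (k.factorial : ℝ) * iteratedDeriv (2 * k) G y) (F y) := by
  have hη0 : 0 ≤ η := by rw [hη]; positivity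
  -- the signed double series
  set f : ℕ × ℕ → ℝ := fun kl => (-η) ^ kl.1 / (kl.1.factorial : ℝ) *
    (η ^ kl.2 / (kl.2.factorial : ℝ) * iteratedDeriv (2 * kl.1 + 2 * kl.2) F y) with hf
  have hsum : Summable f := by
    refine Summable.of_norm (hconv.congr fun kl => ?_)
    simp only [hf, norm_mul, norm_div, norm_pow, norm_neg, Real.norm_eq_abs, abs_of_nonneg hη0,
      Nat.abs_cast, pow_add]
    field_simp
  have h1 : HasSum (fun k : ℕ => (-η) ^ k / (k.factorial : ℝ) * iteratedDeriv (2 * k) G y)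
      (∑' kl, f kl) :=
    hsum.hasSum.prod_fiberwise fun k => (hGderiv k).mul_left _
  -- sums over antidiagonals vanish except for the first one
  have hanti : ∀ n : ℕ, ∑ kl ∈ Finset.HasAntidiagonal.antidiagonal n, f kl = if n = 0 then F y else 0 := by
    intro n
    have h2 : ∑ kl ∈ Finset.HasAntidiagonal.antidiagonal n, f kl =
        iteratedDeriv (2 * n) F y / (n.factorial : ℝ) * (-η + η) ^ n := by
      rw [(Commute.all (-η) η).add_pow', Finset.mul_sum]
      refine Finset.sum_congr rfl fun kl hkl => ?_
      have hn : kl.1 + kl.2 = n := Finset.HasAntidiagonal.mem_antidiagonal.mp hkl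
      subst hn
      have hc : ((kl.1 + kl.2).choose kl.1 : ℝ) * kl.1.factorial * kl.2.factorial =
          (kl.1 + kl.2).factorial := by
        have h := Nat.choose_mul_factorial_mul_factorial (Nat.le_add_right kl.1 kl.2)
        rw [Nat.add_sub_cancel_left] at h
        exact_mod_cast h
      simp only [hf, nsmul_eq_mul, ← mul_add]
      rw [← hc]
      have hc0 : ((kl.1 + kl.2).choose kl.1 : ℝ) ≠ 0 := by
        exact_mod_cast (Nat.choose_pos (Nat.le_add_right _ _)).ne'
      field_simp
    rw [h2]
    by_cases hn : n = 0
    · subst hn; simp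
    · simp [hn]
  have h3 : ∑' kl, f kl = F y := by
    have h4 := (Finset.HasAntidiagonal.sigmaAntidiagonalEquivProd (A := ℕ)).hasSum_iff.mpr hsum.hasSum
    have h5 := h4.sigma fun n => hasSum_fintype _
    have h6 : HasSum (fun n : ℕ => if n = 0 then F y else 0) (F y) := hasSum_ite_eq 0 (F y)
    refine HasSum.unique h5 ?_
    convert h6 using 2 with n
    rw [← hanti n, ← Finset.sum_coe_sort (Finset.HasAntidiagonal.antidiagonal n) f]
    rfl
  rw [← h3]
  exact h1
end

section
/- Let (x_k)_{k≥1} be a sequence of real numbers and η ∈ ℝ such that Σ_{k≥1} (η^k/k!) x_k converges absolutely. Then for every integer j ≥ 0, (1/j!) · (Σ_{k=1}^∞ (η^k/k!) x_k)^j = Σ_{n≥j} (η^n/n!) · B_{n,j}(x₁, x₂, …, x_{n−j+1}), where the right-hand side converges absolutely. -/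
open MeasureTheory Filter

/-- The partial Bell polynomial `B_{n,j}(x₁, …, x_{n−j+1})`: the sum over all tuples of
nonnegative integers `(i₁, …, i_{n−j+1})` with `i₁ + ⋯ + i_{n−j+1} = j` and
`1·i₁ + 2·i₂ + ⋯ + (n−j+1)·i_{n−j+1} = n` of
`n!/(i₁!⋯i_{n−j+1}!) · ∏_m (x_m/m!)^{i_m}`.  (Here `x : ℕ → ℝ` and `x m` is `x_m`.) -/
noncomputable def bellPartial (n j : ℕ) (x : ℕ → ℝ) : ℝ :=
  ∑ i ∈ Finset.filter
      (fun i : Fin (n - j + 1) → ℕ =>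
        (∑ m, i m) = j ∧ (∑ m, (m.1 + 1) * i m) = n)
      (Fintype.piFinset fun _ => Finset.range (n + 1)),
    (n.factorial : ℝ) / (∏ m, ((i m).factorial : ℝ)) *
      ∏ m, (x (m.1 + 1) / ((m.1 + 1).factorial : ℝ)) ^ i m

lemma coeff_pow_summable (a : ℕ → ℝ) (ha : Summable fun k => ‖a k‖) (j : ℕ) :
    (Summable fun n => ‖PowerSeries.coeff n ((PowerSeries.mk a) ^ j)‖) ∧
      ∑' n, PowerSeries.coeff n ((PowerSeries.mk a) ^ j) = (∑' k, a k) ^ j := by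
  induction j with
  | zero =>
    simp only [pow_zero, PowerSeries.coeff_one]
    refine ⟨?_, by simp⟩
    apply summable_of_ne_finset_zero (s := {0})
    intro b hb
    simp at hb
    simp [hb]
  | succ j ih =>
    obtain ⟨h1, h2⟩ := ih
    simp only [pow_succ, PowerSeries.coeff_mul, PowerSeries.coeff_mk]
    generalize hc : (fun n => PowerSeries.coeff n ((PowerSeries.mk a) ^ j)) = c at h2
    have hc' : ∀ n, PowerSeries.coeff n ((PowerSeries.mk a) ^ j) = c n := fun n => congrFun hc n
    simp only [hc'] at h1 ⊢
    exact ⟨summable_norm_sum_mul_antidiagonal_of_summable_norm h1 ha,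
      by rw [← h2, tsum_mul_tsum_eq_tsum_sum_antidiagonal_of_summable_norm h1 ha]⟩

lemma coeff_pow_eq (a : ℕ → ℝ) (d j : ℕ) :
    PowerSeries.coeff d ((PowerSeries.mk a) ^ j) =
      ∑ i ∈ (Finset.piAntidiag (Finset.univ : Finset (Fin (d + 1))) j).filter
        (fun i => ∑ m, m.1 * i m = d),
        (Nat.multinomial Finset.univ i : ℝ) * ∏ m, a m.1 ^ i m := by
  have ht : PowerSeries.trunc (d + 1) (PowerSeries.mk a) =
      ∑ m : Fin (d + 1), Polynomial.monomial m.1 (a m.1) := by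
    rw [← Finset.sum_range (fun m => Polynomial.monomial m (a m))]
    ext k
    simp [PowerSeries.coeff_trunc, Polynomial.finsetSum_coeff, Polynomial.coeff_monomial]
  have h1 : PowerSeries.coeff d ((PowerSeries.mk a) ^ j) =
      Polynomial.coeff ((∑ m : Fin (d + 1), Polynomial.monomial m.1 (a m.1)) ^ j) d := by
    rw [← PowerSeries.coeff_coe_trunc_of_lt (Nat.lt_succ_self d), ← PowerSeries.trunc_trunc_pow,
      PowerSeries.coeff_coe_trunc_of_lt (Nat.lt_succ_self d), ← Polynomial.coe_pow,
      Polynomial.coeff_coe, ht]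
  rw [h1, Finset.sum_pow_eq_sum_piAntidiag, Polynomial.finsetSum_coeff, Finset.sum_filter]
  refine Finset.sum_congr rfl fun i _ => ?_
  have h2 : ∏ m : Fin (d + 1), (Polynomial.monomial m.1 (a m.1)) ^ i m =
      Polynomial.monomial (∑ m : Fin (d + 1), m.1 * i m) (∏ m : Fin (d + 1), a m.1 ^ i m) := by
    simp only [Polynomial.monomial_pow]
    simp only [← Polynomial.C_mul_X_pow_eq_monomial, Finset.prod_mul_distrib,
      Finset.prod_pow_eq_pow_sum, map_prod]
  rw [h2, Polynomial.coeff_natCast_mul, Polynomial.coeff_monomial]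
  simp

lemma bell_zero (x : ℕ → ℝ) (n j : ℕ) (h : n < j) : bellPartial n j x = 0 := by
  unfold bellPartial
  apply Finset.sum_eq_zero
  intro i hi
  exfalso
  simp only [Finset.mem_filter] at hi
  obtain ⟨-, h1, h2⟩ := hi
  have : ∑ m, i m ≤ ∑ m : Fin (n - j + 1), (m.1 + 1) * i m :=
    Finset.sum_le_sum fun m _ => Nat.le_mul_of_pos_left _ (Nat.succ_pos _)
  omega

lemma bell_coeff (x : ℕ → ℝ) (η : ℝ) (d j : ℕ) :
    η ^ (d + j) / ((d + j).factorial : ℝ) * bellPartial (d + j) j x =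
      1 / (j.factorial : ℝ) * PowerSeries.coeff d
        ((PowerSeries.mk fun k => η ^ (k + 1) / ((k + 1).factorial : ℝ) * x (k + 1)) ^ j) := by
  rw [coeff_pow_eq]
  unfold bellPartial
  have e : d + j - j = d := by omega
  rw [e, Finset.mul_sum, Finset.mul_sum]
  have key : ∀ i : Fin (d + 1) → ℕ, ∑ m, (m.1 + 1) * i m = ∑ m, m.1 * i m + ∑ m, i m := by
    intro i
    rw [← Finset.sum_add_distrib]
    exact Finset.sum_congr rfl fun m _ => by ring
  refine Finset.sum_congr ?_ ?_
  · ext i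
    simp only [Finset.mem_filter, Fintype.mem_piFinset, Finset.mem_range, Finset.mem_piAntidiag,
      key]
    constructor
    · rintro ⟨-, h1, h2⟩
      exact ⟨⟨h1, by simp⟩, by omega⟩
    · rintro ⟨⟨h1, -⟩, h2⟩
      change ∑ m, i m = j at h1
      refine ⟨fun m => ?_, h1, by omega⟩
      have := Finset.single_le_sum (f := i) (fun _ _ => Nat.zero_le _) (Finset.mem_univ m)
      change i m ≤ ∑ m, i m at this
      omega
  · intro i hi
    simp only [Finset.mem_filter, Finset.mem_piAntidiag] at hi
    obtain ⟨⟨h1, -⟩, h2⟩ := hi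
    have hm : (∏ m, ((i m).factorial : ℝ)) * (Nat.multinomial Finset.univ i : ℝ)
        = (j.factorial : ℝ) := by
      have := Nat.multinomial_spec Finset.univ i
      rw [h1] at this
      exact_mod_cast this
    have hp : ∏ m : Fin (d + 1), (η ^ (m.1 + 1) / ((m.1 + 1).factorial : ℝ) * x (m.1 + 1)) ^ i m
        = η ^ (d + j) * ∏ m : Fin (d + 1), (x (m.1 + 1) / ((m.1 + 1).factorial : ℝ)) ^ i m := by
      have : η ^ (d + j) = ∏ m : Fin (d + 1), (η ^ (m.1 + 1)) ^ i m := by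
        simp only [← pow_mul]
        rw [Finset.prod_pow_eq_pow_sum, key, h1, h2]
      rw [this, ← Finset.prod_mul_distrib]
      refine Finset.prod_congr rfl fun m _ => ?_
      rw [← mul_pow]
      congr 1
      ring
    rw [hp, ← hm]
    have hn : (∏ m, ((i m).factorial : ℝ)) ≠ 0 :=
      Finset.prod_ne_zero_iff.2 fun m _ => by positivity
    have hj : (Nat.multinomial Finset.univ i : ℝ) ≠ 0 := by
      intro h0
      rw [h0, mul_zero] at hm
      exact (Nat.cast_ne_zero.2 (Nat.factorial_ne_zero j)) hm.symm
    have hf : ((d + j).factorial : ℝ) ≠ 0 := by positivity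
    field_simp

/-- **Powers of an exponential-type series are generated by partial Bell polynomials.**
If `Σ_{k≥1} (η^k/k!) x_k` converges absolutely then for every `j ≥ 0`,
`(1/j!) (Σ_{k≥1} (η^k/k!) x_k)^j = Σ_{n≥j} (η^n/n!) B_{n,j}(x₁,…,x_{n−j+1})`,
the right-hand side converging absolutely.  (The summation over all `n : ℕ` coincides with the
summation over `n ≥ j` since `B_{n,j} = 0` for `n < j`.) -/
theorem bell_series_power (x : ℕ → ℝ) (η : ℝ)
    (habs : Summable fun k : ℕ => |η ^ (k + 1) / ((k + 1).factorial : ℝ) * x (k + 1)|)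
    (j : ℕ) :
    HasSum (fun n : ℕ => η ^ n / (n.factorial : ℝ) * bellPartial n j x)
        (1 / (j.factorial : ℝ) *
          (∑' k : ℕ, η ^ (k + 1) / ((k + 1).factorial : ℝ) * x (k + 1)) ^ j)
    ∧ Summable fun n : ℕ => |η ^ n / (n.factorial : ℝ) * bellPartial n j x| := by
  obtain ⟨h1, h2⟩ := coeff_pow_summable
    (fun k => η ^ (k + 1) / ((k + 1).factorial : ℝ) * x (k + 1)) habs j
  have inj : Function.Injective (fun d : ℕ => d + j) := add_left_injective j
  have hz : ∀ n ∉ Set.range (fun d : ℕ => d + j),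
      η ^ n / (n.factorial : ℝ) * bellPartial n j x = 0 := by
    intro n hn
    rw [bell_zero, mul_zero]
    by_contra h
    exact hn ⟨n - j, by simp only; omega⟩
  constructor
  · rw [← inj.hasSum_iff hz, ← h2]
    have := h1.of_norm.hasSum.mul_left (1 / (j.factorial : ℝ))
    have e : ((fun n : ℕ => η ^ n / (n.factorial : ℝ) * bellPartial n j x) ∘ fun d => d + j) =
        fun d => 1 / (j.factorial : ℝ) * PowerSeries.coeff d ((PowerSeries.mk fun k =>
          η ^ (k + 1) / ((k + 1).factorial : ℝ) * x (k + 1)) ^ j) :=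
      funext fun d => bell_coeff x η d j
    rw [e]
    exact this
  · rw [← inj.summable_iff (fun n hn => by rw [hz n hn, abs_zero])]
    have := (h1.of_norm.mul_left (1 / (j.factorial : ℝ))).abs
    refine this.congr fun d => ?_
    simp only [Function.comp, bell_coeff]
end

section
/- Consider the additive Gaussian model Y = X + σZ with η = σ²/2 and cumulative distribution functions F, G of X, Y. Assume F is infinitely differentiable with F^{(1)} > 0, and define functions g_k : ℝ → ℝ recursively by g₁ = F^{(2)}/F^{(1)} and, for k ≥ 2, g_k = −Σ_{j=2}^{k} (F^{(j)}/F^{(1)}) · B_{k,j}(g₁,…,g_{k−j+1}) + F^{(2k)}/F^{(1)}. Define T_F(y) = y + Σ_{k=1}^∞ (η^k/k!) g_k(y). Then for every y at which the series T_F(y) converges absolutely, F itself is represented by its everywhere-convergent Taylor series at y, and G(y) = Σ_{k≥0}(η^k/k!) F^{(2k)}(y) with all rearrangements absolutely convergent, one has F(T_F(y)) = G(y); in particular T_F(y) = F^{-1}(G(y)), the optimal transport map pushing Q onto P. -/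
open MeasureTheory ProbabilityTheory Filter

/-- The generating series with zero constant coefficient. -/
noncomputable def bellSeries (x : ℕ → ℝ) : PowerSeries ℝ :=
  PowerSeries.mk fun m => x (m + 1) / ((m + 1).factorial : ℝ)

theorem bellPartial_eq_coeff (x : ℕ → ℝ) (n j : ℕ) :
    bellPartial n j x * j.factorial =
      n.factorial * PowerSeries.coeff n ((PowerSeries.X * bellSeries x) ^ j) := by
  rw [mul_pow, PowerSeries.coeff_X_pow_mul']
  split_ifs with h
  · have h1 : PowerSeries.coeff (n - j) (bellSeries x ^ j) =
        PowerSeries.coeff (n - j)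
          ((PowerSeries.trunc (n - j + 1) (bellSeries x) : PowerSeries ℝ) ^ j) := by
      have := congrArg (fun p => Polynomial.coeff p (n - j))
        (PowerSeries.trunc_trunc_pow (bellSeries x) (n - j + 1) j)
      simp only [PowerSeries.coeff_trunc, Nat.lt_succ_self, if_true] at this
      exact this.symm
    have h2 : (PowerSeries.trunc (n - j + 1) (bellSeries x) : PowerSeries ℝ) =
        ∑ m : Fin (n - j + 1), PowerSeries.C (x (m.1 + 1) / ((m.1 + 1).factorial : ℝ)) *
          PowerSeries.X ^ m.1 := by
      ext d
      rw [Polynomial.coeff_coe, PowerSeries.coeff_trunc, map_sum]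
      simp only [PowerSeries.coeff_C_mul, PowerSeries.coeff_X_pow, bellSeries,
        PowerSeries.coeff_mk]
      split_ifs with hd
      · rw [Finset.sum_eq_single (⟨d, hd⟩ : Fin (n - j + 1))]
        · simp
        · intro b _ hb
          have : d ≠ b.1 := fun h => hb (Fin.ext h.symm)
          simp [this]
        · simp
      · symm
        apply Finset.sum_eq_zero
        intro b _
        have : d ≠ b.1 := by have := b.2; omega
        simp [this]
    rw [h1, h2, Finset.sum_pow_eq_sum_piAntidiag, map_sum, bellPartial, Finset.sum_mul,
      Finset.mul_sum]
    have key : ∀ i : Fin (n - j + 1) → ℕ,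
        PowerSeries.coeff (n - j) ((Nat.multinomial Finset.univ i : PowerSeries ℝ) *
          ∏ m, (PowerSeries.C (x (m.1 + 1) / ((m.1 + 1).factorial : ℝ)) *
          PowerSeries.X ^ m.1) ^ i m) =
        if n - j = ∑ m, m.1 * i m then (Nat.multinomial Finset.univ i : ℝ) *
          ∏ m, (x (m.1 + 1) / ((m.1 + 1).factorial : ℝ)) ^ i m else 0 := by
      intro i
      have e1 : (Nat.multinomial Finset.univ i : PowerSeries ℝ) =
        PowerSeries.C (Nat.multinomial Finset.univ i : ℝ) := by simp
      simp only [mul_pow, ← pow_mul, Finset.prod_mul_distrib, Finset.prod_pow_eq_pow_sum,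
        ← map_pow, ← map_prod]
      rw [e1, PowerSeries.coeff_C_mul, PowerSeries.coeff_C_mul, PowerSeries.coeff_X_pow]
      split_ifs <;> simp
    simp only [key, mul_ite, mul_zero]
    rw [← Finset.sum_filter]
    apply Finset.sum_congr
    · ext i
      simp only [Finset.mem_filter, Fintype.mem_piFinset, Finset.mem_range,
        Finset.mem_piAntidiag, Finset.mem_univ, implies_true, and_true]
      have e : ∑ m : Fin (n - j + 1), (m.1 + 1) * i m = ∑ m, m.1 * i m + ∑ m, i m := by
        rw [← Finset.sum_add_distrib]
        exact Finset.sum_congr rfl fun _ _ => by ring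
      rw [e]
      constructor
      · rintro ⟨_, h1, h2⟩
        exact ⟨h1, by omega⟩
      · rintro ⟨h1, h2⟩
        replace h1 : ∑ m, i m = j := h1
        refine ⟨fun a => ?_, h1, by omega⟩
        have : i a ≤ ∑ m, i m := Finset.single_le_sum (f := i) (fun _ _ => Nat.zero_le _) (Finset.mem_univ a)
        omega
    · intro i hi
      simp only [Finset.mem_filter, Finset.mem_piAntidiag] at hi
      have hs := Nat.multinomial_spec Finset.univ i
      rw [hi.1.1] at hs
      have hs' : (∏ m, ((i m).factorial : ℝ)) * (Nat.multinomial Finset.univ i : ℝ) =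
          (j.factorial : ℝ) := by exact_mod_cast hs
      have hne : (∏ m, ((i m).factorial : ℝ)) ≠ 0 :=
        Finset.prod_ne_zero_iff.2 fun m _ => by positivity
      rw [← hs']
      field_simp
  · rw [bellPartial, Finset.sum_eq_zero, mul_zero, zero_mul]
    intro i hi
    exfalso
    simp only [Finset.mem_filter] at hi
    obtain ⟨_, h1, h2⟩ := hi
    have : ∑ m, i m ≤ ∑ m : Fin (n - j + 1), (m.1 + 1) * i m :=
      Finset.sum_le_sum fun m _ => Nat.le_mul_of_pos_left _ (Nat.succ_pos _)
    omega

theorem bellPartial_zero_right (x : ℕ → ℝ) {n : ℕ} (hn : n ≠ 0) : bellPartial n 0 x = 0 := by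
  have := bellPartial_eq_coeff x n 0
  simpa [PowerSeries.coeff_one, hn] using this

theorem bellPartial_zero_zero (x : ℕ → ℝ) : bellPartial 0 0 x = 1 := by
  have := bellPartial_eq_coeff x 0 0
  simpa using this

theorem bellPartial_of_lt (x : ℕ → ℝ) {n j : ℕ} (h : n < j) : bellPartial n j x = 0 := by
  have := bellPartial_eq_coeff x n j
  rw [mul_pow, PowerSeries.coeff_X_pow_mul', if_neg (by omega), mul_zero] at this
  exact (mul_eq_zero.1 this).resolve_right (by positivity)

theorem bellPartial_one_right (x : ℕ → ℝ) (n : ℕ) : bellPartial (n + 1) 1 x = x (n + 1) := by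
  have := bellPartial_eq_coeff x (n + 1) 1
  rw [pow_one, PowerSeries.coeff_succ_X_mul, bellSeries, PowerSeries.coeff_mk,
    mul_div_cancel₀ _ (by positivity)] at this
  simpa using this

theorem series_pow_hasSum (A : PowerSeries ℝ) (η S : ℝ)
    (h : Summable fun n => ‖PowerSeries.coeff n A * η ^ n‖)
    (hS : HasSum (fun n => PowerSeries.coeff n A * η ^ n) S) (j : ℕ) :
    (Summable fun n => ‖PowerSeries.coeff n (A ^ j) * η ^ n‖) ∧
    HasSum (fun n => PowerSeries.coeff n (A ^ j) * η ^ n) (S ^ j) := by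
  induction j with
  | zero =>
    have hz : ∀ n ∉ ({0} : Finset ℕ), PowerSeries.coeff n ((A : PowerSeries ℝ) ^ 0) * η ^ n = 0 := by
      intro n hn
      have : n ≠ 0 := by simpa using hn
      simp [PowerSeries.coeff_one, this]
    constructor
    · exact summable_of_ne_finset_zero (s := {0}) fun n hn => by rw [hz n hn, norm_zero]
    · have := hasSum_sum_of_ne_finset_zero (L := SummationFilter.unconditional ℕ) hz
      simpa using this
  | succ j ih =>
    have e : ∀ n, PowerSeries.coeff n (A ^ (j + 1)) * η ^ n =
        ∑ kl ∈ Finset.HasAntidiagonal.antidiagonal n, (PowerSeries.coeff kl.1 (A ^ j) * η ^ kl.1) *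
          (PowerSeries.coeff kl.2 A * η ^ kl.2) := by
      intro n
      rw [pow_succ, PowerSeries.coeff_mul, Finset.sum_mul]
      refine Finset.sum_congr rfl fun p hp => ?_
      rw [← Finset.HasAntidiagonal.mem_antidiagonal.1 hp, pow_add]
      ring
    have s1 := summable_norm_sum_mul_antidiagonal_of_summable_norm ih.1 h
    have s2 := tsum_mul_tsum_eq_tsum_sum_antidiagonal_of_summable_norm ih.1 h
    simp only [← e] at s1 s2
    refine ⟨s1, ?_⟩
    rw [ih.2.tsum_eq, hS.tsum_eq] at s2
    rw [pow_succ S j, s2]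
    exact s1.of_norm.hasSum

/-- **F-expansion of the optimal transport map.**
In the additive Gaussian model `Y = X + σZ` with `η = σ²/2` and cdfs `F, G` of `X, Y`,
define `g₁ = F⁽²⁾/F⁽¹⁾` and, for `k ≥ 2`,
`g_k = −Σ_{j=2}^k (F⁽ʲ⁾/F⁽¹⁾) B_{k,j}(g₁,…,g_{k−j+1}) + F⁽²ᵏ⁾/F⁽¹⁾`, and set
`T_F(y) = y + Σ_{k≥1} (η^k/k!) g_k(y)`.  Then at every `y` where `T_F(y)` converges
absolutely, `F` equals its everywhere-convergent Taylor series at `y`, `G(y)` has the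
absolutely convergent expansion `Σ (η^k/k!) F^{(2k)}(y)` and all rearrangements converge
absolutely, one has `F(T_F(y)) = G(y)`; in particular `T_F(y) = F⁻¹(G(y))` where
`F⁻¹(t) = inf {x | F x > t}` is the quantile function. -/
theorem F_expansion_optimal_transport
    {Ω : Type*} [MeasureSpace Ω] [IsProbabilityMeasure (ℙ : Measure Ω)]
    (X Z : Ω → ℝ) (hXm : Measurable X) (hZm : Measurable Z)
    (hZlaw : Measure.map Z ℙ = gaussianReal 0 1)
    (hXZ : IndepFun X Z ℙ)
    (σ : ℝ) (hσ : 0 < σ) (η : ℝ) (hη : η = σ ^ 2 / 2)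
    (Y : Ω → ℝ) (hY : ∀ ω, Y ω = X ω + σ * Z ω)
    (F G : ℝ → ℝ)
    (hF : ∀ x, F x = (Measure.map X ℙ (Set.Iic x)).toReal)
    (hG : ∀ x, G x = (Measure.map Y ℙ (Set.Iic x)).toReal)
    (hFsmooth : ContDiff ℝ (⊤ : ℕ∞) F)
    (hFpos : ∀ t, 0 < iteratedDeriv 1 F t)
    (g : ℕ → ℝ → ℝ)
    (hg1 : ∀ t, g 1 t = iteratedDeriv 2 F t / iteratedDeriv 1 F t)
    (hgk : ∀ k, 2 ≤ k → ∀ t, g k t =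
      -(∑ j ∈ Finset.Icc 2 k,
          iteratedDeriv j F t / iteratedDeriv 1 F t *
            bellPartial k j fun m => g m t)
        + iteratedDeriv (2 * k) F t / iteratedDeriv 1 F t)
    (y : ℝ)
    (habs : Summable fun k : ℕ => |η ^ (k + 1) / ((k + 1).factorial : ℝ) * g (k + 1) y|)
    (htaylor : ∀ x : ℝ,
      HasSum (fun j : ℕ => iteratedDeriv j F y / (j.factorial : ℝ) * (x - y) ^ j) (F x))
    (hGexp : HasSum (fun k : ℕ => η ^ k / (k.factorial : ℝ) * iteratedDeriv (2 * k) F y) (G y))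
    (hGexpAbs : Summable fun k : ℕ => |η ^ k / (k.factorial : ℝ) * iteratedDeriv (2 * k) F y|)
    (hFubini : Summable fun p : ℕ × ℕ =>
      |iteratedDeriv p.1 F y * (η ^ p.2 / (p.2.factorial : ℝ)) *
        bellPartial p.2 p.1 fun m => g m y|) :
    F (y + ∑' k : ℕ, η ^ (k + 1) / ((k + 1).factorial : ℝ) * g (k + 1) y) = G y
    ∧ (y + ∑' k : ℕ, η ^ (k + 1) / ((k + 1).factorial : ℝ) * g (k + 1) y)
        = sInf {x : ℝ | G y < F x} := by
  set S := ∑' k : ℕ, η ^ (k + 1) / ((k + 1).factorial : ℝ) * g (k + 1) y with hSdef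
  set x : ℕ → ℝ := fun m => g m y with hx
  have ecoef : ∀ k : ℕ, PowerSeries.coeff (k + 1) (PowerSeries.X * bellSeries x) * η ^ (k + 1) =
      η ^ (k + 1) / ((k + 1).factorial : ℝ) * g (k + 1) y := by
    intro k
    rw [PowerSeries.coeff_succ_X_mul, bellSeries, PowerSeries.coeff_mk]
    simp only [hx]
    ring
  have hA : Summable fun n => ‖PowerSeries.coeff n (PowerSeries.X * bellSeries x) * η ^ n‖ := by
    rw [← summable_nat_add_iff 1]
    simp only [ecoef, Real.norm_eq_abs]
    exact habs
  have hAS : HasSum (fun n => PowerSeries.coeff n (PowerSeries.X * bellSeries x) * η ^ n) S := by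
    rw [← hasSum_nat_add_iff' 1]
    simp only [ecoef]
    have h0 : ∑ i ∈ Finset.range 1,
        PowerSeries.coeff i (PowerSeries.X * bellSeries x) * η ^ i = 0 := by
      simp
    rw [h0, sub_zero]
    exact habs.of_abs.hasSum
  set f : ℕ × ℕ → ℝ := fun p => iteratedDeriv p.1 F y * (η ^ p.2 / (p.2.factorial : ℝ)) *
        bellPartial p.2 p.1 x with hf
  have hfs : Summable f := hFubini.of_abs
  have hrow : ∀ j, HasSum (fun n => f (j, n))
      (iteratedDeriv j F y / (j.factorial : ℝ) * S ^ j) := by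
    intro j
    have := ((series_pow_hasSum _ η S hA hAS j).2).mul_left
      (iteratedDeriv j F y / (j.factorial : ℝ))
    refine (funext fun n => ?_ : (fun n => f (j, n)) = _) ▸ this
    have hb := bellPartial_eq_coeff x n j
    have h1 : (j.factorial : ℝ) ≠ 0 := by positivity
    have h2 : (n.factorial : ℝ) ≠ 0 := by positivity
    simp only [hf]
    field_simp
    linear_combination (iteratedDeriv j F y * η ^ n) * hb
  have hcol : ∀ n, HasSum (fun j => f (j, n))
      (η ^ n / (n.factorial : ℝ) * iteratedDeriv (2 * n) F y) := by
    intro n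
    have hz : ∀ j ∉ Finset.range (n + 1), f (j, n) = 0 := by
      intro j hj
      simp only [hf]
      rw [bellPartial_of_lt x (by simpa using hj), mul_zero]
    have := hasSum_sum_of_ne_finset_zero (L := SummationFilter.unconditional ℕ) hz
    convert this using 1
    rcases n with _ | n
    · simp [hf, bellPartial_zero_zero]
    · have hp := (hFpos y).ne'
      have hmain : iteratedDeriv (2 * (n + 1)) F y = iteratedDeriv 1 F y * x (n + 1) +
          ∑ j ∈ Finset.Icc 2 (n + 1), iteratedDeriv j F y * bellPartial (n + 1) j x := by
        have hs : ∑ j ∈ Finset.Icc 2 (n + 1), iteratedDeriv j F y * bellPartial (n + 1) j x =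
            iteratedDeriv 1 F y * ∑ j ∈ Finset.Icc 2 (n + 1),
              iteratedDeriv j F y / iteratedDeriv 1 F y * bellPartial (n + 1) j x := by
          rw [Finset.mul_sum]
          refine Finset.sum_congr rfl fun j _ => ?_
          field_simp
        rw [hs]
        rcases n with _ | n
        · have hx1 : x (0 + 1) = g 1 y := rfl
          rw [hx1, hg1, mul_div_cancel₀ _ hp]
          simp
        · have := hgk (n + 1 + 1) (by omega) y
          have hx1 : x (n + 1 + 1) = g (n + 1 + 1) y := rfl
          rw [hx1, this]
          field_simp
          ring
      have hr : Finset.range (n + 1 + 1) = insert 0 (insert 1 (Finset.Icc 2 (n + 1))) := by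
        ext a
        simp only [Finset.mem_range, Finset.mem_insert, Finset.mem_Icc]
        omega
      rw [hr, Finset.sum_insert (by simp), Finset.sum_insert (by simp), hmain]
      simp only [hf]
      rw [bellPartial_zero_right x (by omega), bellPartial_one_right, mul_zero, zero_add,
        mul_add, Finset.mul_sum]
      congr 1
      · ring
      · exact Finset.sum_congr rfl fun j _ => by ring
  have hFS : F (y + S) = G y := by
    have h1 := hfs.hasSum.prod_fiberwise hrow
    have h2 := ((Equiv.prodComm ℕ ℕ).hasSum_iff.2 hfs.hasSum).prod_fiberwise hcol
    have h3 := htaylor (y + S)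
    rw [add_sub_cancel_left] at h3
    rw [h3.unique h1, hGexp.unique h2]
  refine ⟨hFS, ?_⟩
  have hmono : StrictMono F := strictMono_of_deriv_pos fun t => by
    simpa [iteratedDeriv_one] using hFpos t
  have hset : {x : ℝ | G y < F x} = Set.Ioi (y + S) := by
    ext t
    rw [Set.mem_ofPred_eq, ← hFS, hmono.lt_iff_lt, Set.mem_Ioi]
  rw [hset, csInf_Ioi]
end

section
/- Let q : ℝ → ℝ be three times continuously differentiable and strictly positive, and write s = q'/q for its score function. Then the second-order denoising function h₂ := −q'''/q + 2·(q''/q)·(q'/q) − (q'/q)³ (the solution of the k = 2 Bell-polynomial recursion with h₁ = q'/q, i.e. h₂ = −G^{(4)}/G^{(1)} + 2 (G^{(3)}/G^{(1)}) h₁ − (G^{(2)}/G^{(1)}) h₁² when G^{(1)} = q) admits the derivative representation h₂(y) = −( (1/2) s(y)² + s'(y) )', i.e. h₂ = −(s s' + s''). Consequently the second-order denoiser satisfies T₂(y) = y + (σ²/2)·(q'(y)/q(y)) − (σ⁴/8)·( (1/2)(q'(y)/q(y))² + (q'(y)/q(y))' )' where T₂(y) = y + η h₁(y) + (η²/2)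 h₂(y) and η = σ²/2. -/
open MeasureTheory Filter

/-- **Derivative representation of the second-order denoising function.**
For a strictly positive `C³` density `q` with score `s = q'/q`, the function
`h₂ = −q'''/q + 2(q''/q)(q'/q) − (q'/q)³` satisfies `h₂ = −((1/2)s² + s')' = −(s s' + s'')`,
and consequently the second-order denoiser `T₂(y) = y + η h₁(y) + (η²/2) h₂(y)` (with
`η = σ²/2`, `h₁ = q'/q`) satisfies
`T₂(y) = y + (σ²/2)(q'/q)(y) − (σ⁴/8)((1/2)(q'/q)² + (q'/q)')'(y)`. -/
theorem second_order_denoiser_representation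
    (q : ℝ → ℝ) (hq : ContDiff ℝ 3 q) (hqpos : ∀ y, 0 < q y)
    (s : ℝ → ℝ) (hs : ∀ y, s y = deriv q y / q y)
    (h₂ : ℝ → ℝ)
    (hh₂ : ∀ y, h₂ y = -(iteratedDeriv 3 q y / q y)
        + 2 * (iteratedDeriv 2 q y / q y) * (deriv q y / q y) - (deriv q y / q y) ^ 3)
    (σ η : ℝ) (hη : η = σ ^ 2 / 2) :
    (∀ y, h₂ y = -deriv (fun t => 1 / 2 * s t ^ 2 + deriv s t) y)
    ∧ (∀ y, h₂ y = -(s y * deriv s y + iteratedDeriv 2 s y))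
    ∧ (∀ y, y + η * (deriv q y / q y) + η ^ 2 / 2 * h₂ y
        = y + σ ^ 2 / 2 * (deriv q y / q y)
          - σ ^ 4 / 8 *
            deriv (fun t => 1 / 2 * (deriv q t / q t) ^ 2
              + deriv (fun u => deriv q u / q u) t) y) := by
  have e2 : iteratedDeriv 2 q = deriv (deriv q) := by
    rw [iteratedDeriv_succ, iteratedDeriv_one]
  have e3 : iteratedDeriv 3 q = deriv (deriv (deriv q)) := by
    rw [iteratedDeriv_succ, e2]
  have c1 : ContDiff ℝ 2 (deriv q) := hq.deriv'
  have c2 : ContDiff ℝ 1 (deriv (deriv q)) := c1.deriv'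
  have d0 : ∀ y, HasDerivAt q (deriv q y) y := fun y =>
    (hq.differentiable (by norm_num) y).hasDerivAt
  have d1 : ∀ y, HasDerivAt (deriv q) (deriv (deriv q) y) y := fun y =>
    (c1.differentiable (by norm_num) y).hasDerivAt
  have d2 : ∀ y, HasDerivAt (deriv (deriv q)) (deriv (deriv (deriv q)) y) y := fun y =>
    (c2.differentiable (by norm_num) y).hasDerivAt
  have hne : ∀ y, q y ≠ 0 := fun y => (hqpos y).ne'
  have hsf : s = fun u => deriv q u / q u := funext hs
  have s1 : ∀ y, HasDerivAt s (deriv (deriv q) y / q y - s y ^ 2) y := by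
    intro y
    have h := (d1 y).div (d0 y) (hne y)
    rw [hsf]
    refine h.congr_deriv ?_
    have := hne y
    field_simp
  have s1f : deriv s = fun y => deriv (deriv q) y / q y - s y ^ 2 :=
    funext fun y => (s1 y).deriv
  have s2 : ∀ y, HasDerivAt (deriv s)
      ((deriv (deriv (deriv q)) y * q y - deriv (deriv q) y * deriv q y) / q y ^ 2
        - 2 * s y * deriv s y) y := by
    intro y
    have h := ((d2 y).div (d0 y) (hne y)).sub ((s1 y).pow 2)
    have hd := (s1 y).deriv
    rw [hd, s1f]
    refine h.congr_deriv ?_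
    norm_num
  have B : ∀ y, h₂ y = -(s y * deriv s y + iteratedDeriv 2 s y) := by
    intro y
    have h2 : iteratedDeriv 2 s = deriv (deriv s) := by
      rw [iteratedDeriv_succ, iteratedDeriv_one]
    rw [h2, (s2 y).deriv, (s1 y).deriv, hh₂, e2, e3, hs]
    have := hne y
    field_simp
    ring
  have A : ∀ y, h₂ y = -deriv (fun t => 1 / 2 * s t ^ 2 + deriv s t) y := by
    intro y
    have h2 : iteratedDeriv 2 s = deriv (deriv s) := by
      rw [iteratedDeriv_succ, iteratedDeriv_one]
    have h : HasDerivAt (fun t => 1 / 2 * s t ^ 2 + deriv s t)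
        (s y * deriv s y + deriv (deriv s) y) y := by
      have hd := (s1 y).differentiableAt.hasDerivAt
      have hd2 := (s2 y).differentiableAt.hasDerivAt
      refine (((hd.pow 2).const_mul (1 / 2)).add hd2).congr_deriv ?_
      norm_num
      ring
    rw [B y, h.deriv, h2]
  refine ⟨A, B, fun y => ?_⟩
  have := A y
  rw [hsf] at this
  rw [this, hη]
  ring
end

section
/- Fix an integer K ≥ 0 and 0 < η ≤ 1/2. Consider the additive Gaussian model Y = X + σZ with η = σ²/2 and cumulative distribution functions F, G of X, Y. Assume F is (2K+2)-times continuously differentiable with sup_{y∈ℝ} |F^{(k)}(y)| ≤ L for all k ≤ 2K+2. Then there exists a constant C depending only on L and K such that for all y ∈ ℝ, | F(y) − Σ_{l=0}^{K} (−1)^l (η^l/l!) G^{(2l)}(y) | ≤ C · η^{K+1}. -/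
open MeasureTheory ProbabilityTheory Filter

/-- Bounded continuous functions composed with affine maps are integrable for a Gaussian. -/
lemma aux_integrable (H : ℝ → ℝ) (L : ℝ) (hc : Continuous H) (hb : ∀ x, |H x| ≤ L) (y s : ℝ) :
    Integrable (fun z => H (y - s * z)) (gaussianReal 0 1) := by
  refine Integrable.of_bound (C := L) ?_ (ae_of_all _ fun z => ?_)
  · exact (hc.comp (by fun_prop)).aestronglyMeasurable
  · simpa using hb _

lemma aux_bound (H : ℝ → ℝ) (L : ℝ) (hb : ∀ x, |H x| ≤ L) (y s : ℝ) :
    |∫ z, H (y - s * z) ∂(gaussianReal 0 1)| ≤ L := by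
  have := norm_integral_le_of_norm_le_const (μ := gaussianReal 0 1) (C := L)
    (f := fun z => H (y - s * z)) (ae_of_all _ fun z => by simpa using hb _)
  simpa using this

lemma aux_deriv_y (H H' : ℝ → ℝ) (L : ℝ) (hH : ∀ x, HasDerivAt H (H' x) x)
    (hc : Continuous H') (hb : ∀ x, |H x| ≤ L) (hb' : ∀ x, |H' x| ≤ L) (y s : ℝ) :
    HasDerivAt (fun y => ∫ z, H (y - s * z) ∂(gaussianReal 0 1))
      (∫ z, H' (y - s * z) ∂(gaussianReal 0 1)) y := by
  have hcH : Continuous H := continuous_iff_continuousAt.2 fun x => (hH x).continuousAt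
  refine (hasDerivAt_integral_of_dominated_loc_of_deriv_le (s := Set.univ)
    (F := fun y z => H (y - s * z)) (F' := fun y z => H' (y - s * z)) (bound := fun _ => L)
    univ_mem (Eventually.of_forall fun x => ?_) (aux_integrable H L hcH hb y s) ?_
    (ae_of_all _ fun z x _ => by simpa using hb' _) (integrable_const _)
    (ae_of_all _ fun z x _ => ?_)).2
  · exact (aux_integrable H L hcH hb x s).aestronglyMeasurable
  · exact (aux_integrable H' L hc hb' y s).aestronglyMeasurable
  · have := (hH (x - s * z)).comp x ((hasDerivAt_id x).sub_const (s * z))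
    rw [mul_one] at this
    exact this

lemma aux_pdf_deriv (z : ℝ) :
    HasDerivAt (gaussianPDFReal 0 1) (-(z * gaussianPDFReal 0 1 z)) z := by
  rw [gaussianPDFReal_def]
  have h : HasDerivAt (fun x : ℝ => -(x - 0) ^ 2 / (2 * ((1 : NNReal) : ℝ))) (-z) z := by
    have := (((hasDerivAt_id z).pow 2).neg).div_const 2
    convert! this using 1
    · ext x; simp
    · simp; ring
  convert! h.exp.const_mul _ using 1
  ring

lemma aux_id_pdf : Integrable (fun z : ℝ => z * gaussianPDFReal 0 1 z) := by
  have := (integrable_mul_exp_neg_mul_sq (b := 1 / 2) (by norm_num)).const_mul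
    (Real.sqrt (2 * Real.pi * ((1 : NNReal) : ℝ)))⁻¹
  refine this.congr (ae_of_all _ fun z => ?_)
  simp only [gaussianPDFReal_def, NNReal.coe_one]
  rw [show -(z - 0) ^ 2 / (2 * 1) = -(1 / 2) * z ^ 2 by ring]
  ring

/-- Stein's identity. -/
lemma aux_stein (f f' : ℝ → ℝ) (L M : ℝ) (hf : ∀ x, HasDerivAt f (f' x) x)
    (hc : Continuous f') (hb : ∀ x, |f x| ≤ L) (hb' : ∀ x, |f' x| ≤ M) :
    ∫ z, z * f z ∂(gaussianReal 0 1) = ∫ z, f' z ∂(gaussianReal 0 1) := by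
  have hcf : Continuous f := continuous_iff_continuousAt.2 fun x => (hf x).continuousAt
  rw [integral_gaussianReal_eq_integral_smul one_ne_zero,
    integral_gaussianReal_eq_integral_smul one_ne_zero]
  have key := integral_mul_deriv_eq_deriv_mul_of_integrable (u := f) (u' := f')
    (v := gaussianPDFReal 0 1) (v' := fun z => -(z * gaussianPDFReal 0 1 z))
    (fun x _ => hf x) (fun x _ => aux_pdf_deriv x)
    (aux_id_pdf.neg.bdd_mul (c := L) hcf.aestronglyMeasurable (ae_of_all _ fun z => by simpa using hb z))
    ((integrable_gaussianPDFReal 0 1).bdd_mul (c := M) hc.aestronglyMeasurable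
      (ae_of_all _ fun z => by simpa using hb' z))
    ((integrable_gaussianPDFReal 0 1).bdd_mul (c := L) hcf.aestronglyMeasurable
      (ae_of_all _ fun z => by simpa using hb z))
  have e1 : ∫ z, f z * -(z * gaussianPDFReal 0 1 z)
      = - ∫ z, gaussianPDFReal 0 1 z • (z * f z) := by
    rw [← integral_neg]; congr 1; ext z; simp; ring
  have e2 : ∫ z, f' z * gaussianPDFReal 0 1 z = ∫ z, gaussianPDFReal 0 1 z • f' z := by
    congr 1; ext z; simp; ring
  rw [e1, e2] at key
  linarith

lemma aux_deriv_s (H H' H'' : ℝ → ℝ) (L : ℝ) (hH : ∀ x, HasDerivAt H (H' x) x)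
    (hH' : ∀ x, HasDerivAt H' (H'' x) x)
    (hc : Continuous H'') (hb : ∀ x, |H x| ≤ L) (hb' : ∀ x, |H' x| ≤ L)
    (hb'' : ∀ x, |H'' x| ≤ L) (y s : ℝ) :
    HasDerivAt (fun s => ∫ z, H (y - s * z) ∂(gaussianReal 0 1))
      (s * ∫ z, H'' (y - s * z) ∂(gaussianReal 0 1)) s := by
  have hcH : Continuous H := continuous_iff_continuousAt.2 fun x => (hH x).continuousAt
  have hcH' : Continuous H' := continuous_iff_continuousAt.2 fun x => (hH' x).continuousAt
  have hid : Integrable (fun z : ℝ => z) (gaussianReal 0 1) :=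
    (memLp_id_gaussianReal (μ := 0) (v := 1) 1).integrable (by simp)
  have h := (hasDerivAt_integral_of_dominated_loc_of_deriv_le (s := Set.univ) (x₀ := s)
    (μ := gaussianReal 0 1)
    (F := fun s z => H (y - s * z)) (F' := fun s z => z * -H' (y - s * z))
    (bound := fun z => |z| * L)
    univ_mem (Eventually.of_forall fun x => 
      (aux_integrable H L hcH hb y x).aestronglyMeasurable) (aux_integrable H L hcH hb y s) 
    (by
      have : Continuous fun z => z * -H' (y - s * z) := by fun_prop
      exact this.aestronglyMeasurable)
    (ae_of_all _ fun z x _ => by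
      rw [norm_mul, norm_neg]
      exact mul_le_mul_of_nonneg_left (hb' _) (abs_nonneg z)) (hid.abs.mul_const L)
    (ae_of_all _ fun z x _ => by
      have h1 : HasDerivAt (fun s => y - s * z) (-z) x := by
        simpa using ((hasDerivAt_id x).mul_const z).const_sub y
      have := (hH (y - x * z)).comp x h1
      convert! this using 1
      ring)).2
  convert! h using 1
  rw [aux_stein (fun z => -H' (y - s * z)) (fun z => s * H'' (y - s * z)) L (|s| * L)
    (fun z => ?_) (by fun_prop) (fun z => by simpa using hb' _) (fun z => ?_)]
  · rw [integral_const_mul]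
  · have h1 : HasDerivAt (fun z => y - s * z) (-s) z := by
      simpa using ((hasDerivAt_id z).const_mul s).const_sub y
    have := ((hH' (y - s * z)).comp z h1).neg
    convert! this using 1
    ring
  · rw [abs_mul]
    exact mul_le_mul_of_nonneg_left (hb'' _) (abs_nonneg s)

lemma aux_sum (U : ℕ → ℝ → ℝ) (K : ℕ)
    (hU : ∀ l ≤ K, ∀ s, HasDerivAt (U l) (s * U (l + 1) s) s) (s : ℝ) :
    HasDerivAt (fun s => ∑ l ∈ Finset.range (K + 1),
        (-1 : ℝ) ^ l * (s ^ 2 / 2) ^ l / (l.factorial : ℝ) * U l s)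
      ((-1) ^ K * (s ^ 2 / 2) ^ K / (K.factorial : ℝ) * (s * U (K + 1) s)) s := by
  induction K with
  | zero => simpa using hU 0 le_rfl s
  | succ K ih =>
    have ih := ih fun l hl => hU l (by omega)
    simp_rw [Finset.sum_range_succ _ (K + 1)]
    have h1 : HasDerivAt (fun s : ℝ => s ^ 2 / 2) s s := by
      have := ((hasDerivAt_id s).pow 2).div_const 2
      simpa using this
    have h2 := ((((h1.pow (K + 1)).const_mul ((-1 : ℝ) ^ (K + 1))).div_const
      ((K + 1).factorial : ℝ))).mul (hU (K + 1) le_rfl s)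
    convert! ih.add h2 using 1
    have : (K.factorial : ℝ) ≠ 0 := by positivity
    have : (K : ℝ) + 1 ≠ 0 := by positivity
    simp only [Nat.factorial_succ, Pi.pow_apply]
    push_cast
    field_simp
    ring

lemma aux_cdf {Ω : Type} [MeasureSpace Ω] [IsProbabilityMeasure (ℙ : Measure Ω)]
    (X Z : Ω → ℝ) (hX : Measurable X) (hZ : Measurable Z)
    (hg : Measure.map Z ℙ = gaussianReal 0 1) (hi : IndepFun X Z ℙ) (σ : ℝ)
    (Y : Ω → ℝ) (hY : ∀ ω, Y ω = X ω + σ * Z ω) (F : ℝ → ℝ)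
    (hF : ∀ x, F x = (Measure.map X ℙ (Set.Iic x)).toReal) (x : ℝ) :
    (Measure.map Y ℙ (Set.Iic x)).toReal = ∫ z, F (x - σ * z) ∂(gaussianReal 0 1) := by
  have hpX : IsProbabilityMeasure (Measure.map X ℙ) := Measure.isProbabilityMeasure_map hX.aemeasurable
  have hm : Measurable fun p : ℝ × ℝ => p.1 + σ * p.2 := by fun_prop
  have hYe : Y = (fun p : ℝ × ℝ => p.1 + σ * p.2) ∘ (fun ω => (X ω, Z ω)) := by
    ext ω; simp [hY]
  rw [hYe, ← Measure.map_map hm (hX.prodMk hZ),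
    (indepFun_iff_map_prod_eq_prod_map_map hX.aemeasurable hZ.aemeasurable).1 hi, hg,
    Measure.map_apply hm measurableSet_Iic, Measure.prod_apply_symm (hm measurableSet_Iic)]
  have hs : ∀ z : ℝ, (fun x' : ℝ => (x', z)) ⁻¹' ((fun p : ℝ × ℝ => p.1 + σ * p.2) ⁻¹' Set.Iic x)
      = Set.Iic (x - σ * z) := by
    intro z; ext t; simp [le_sub_iff_add_le]
  have hmeas := measurable_measure_prodMk_right (μ := Measure.map X ℙ)
    (hm (measurableSet_Iic (a := x)))
  simp_rw [hF]
  rw [integral_toReal]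
  · simp_rw [hs]
  · simp_rw [hs] at hmeas
    exact hmeas.aemeasurable
  · exact ae_of_all _ fun z => measure_lt_top _ _

/-- **Finite-order expansion of `F` in terms of even derivatives of `G`.**
Fix `K ≥ 0` and `L > 0`.  There is a constant `C` depending only on `K` and `L` such that,
in the additive Gaussian model `Y = X + σZ` with `0 < η = σ²/2 ≤ 1/2` and cdfs `F, G` of
`X, Y`, if `F` is `(2K+2)`-times continuously differentiable with `sup_ℝ |F^{(k)}| ≤ L` for
all `k ≤ 2K+2`, then for all `y`,
`|F(y) − Σ_{l=0}^K (−1)^l (η^l/l!) G^{(2l)}(y)| ≤ C η^{K+1}`. -/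
theorem F_in_G_finite_term
    (K : ℕ) (L : ℝ) (hL : 0 < L) :
    ∃ C : ℝ,
      ∀ (Ω : Type) [MeasureSpace Ω] [IsProbabilityMeasure (ℙ : Measure Ω)]
        (X Z : Ω → ℝ), Measurable X → Measurable Z →
        Measure.map Z ℙ = gaussianReal 0 1 → IndepFun X Z ℙ →
        ∀ σ η : ℝ, 0 < η → η ≤ 1 / 2 → η = σ ^ 2 / 2 →
        ∀ Y : Ω → ℝ, (∀ ω, Y ω = X ω + σ * Z ω) →
        ∀ F G : ℝ → ℝ,
          (∀ x, F x = (Measure.map X ℙ (Set.Iic x)).toReal) →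
          (∀ x, G x = (Measure.map Y ℙ (Set.Iic x)).toReal) →
          ContDiff ℝ (2 * K + 2) F →
          (∀ k ≤ 2 * K + 2, ∀ x : ℝ, |iteratedDeriv k F x| ≤ L) →
        ∀ y : ℝ,
          |F y - ∑ l ∈ Finset.range (K + 1),
              (-1 : ℝ) ^ l * η ^ l / (l.factorial : ℝ) * iteratedDeriv (2 * l) G y|
            ≤ C * η ^ (K + 1) := by
  refine ⟨2 * L / K.factorial, ?_⟩
  intro Ω _ _ X Z hX hZ hg hi σ η hη _ hησ Y hY F G hF hG hC hb y
  have hC' : ContDiff ℝ ((2 * K + 2 : ℕ) : WithTop ℕ∞) F := by exact_mod_cast hC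
  have hd : ∀ k < 2 * K + 2, ∀ x, HasDerivAt (iteratedDeriv k F) (iteratedDeriv (k + 1) F x) x := by
    intro k hk x
    rw [iteratedDeriv_succ]
    exact (hC'.differentiable_iteratedDeriv k (by exact_mod_cast hk) x).hasDerivAt
  have hc : ∀ k ≤ 2 * K + 2, Continuous (iteratedDeriv k F) := fun k hk =>
    hC'.continuous_iteratedDeriv k (by exact_mod_cast hk)
  have hGd : ∀ k ≤ 2 * K + 2, iteratedDeriv k G
      = fun y => ∫ z, iteratedDeriv k F (y - σ * z) ∂(gaussianReal 0 1) := by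
    intro k
    induction k with
    | zero =>
      intro _
      ext x
      simp only [iteratedDeriv_zero]
      rw [hG, aux_cdf X Z hX hZ hg hi σ Y hY F hF]
    | succ k ih =>
      intro hk
      ext x
      rw [iteratedDeriv_succ, ih (by omega)]
      exact (aux_deriv_y _ _ L (hd k (by omega)) (hc _ hk) (hb k (by omega)) (hb _ hk) x σ).deriv
  set U : ℕ → ℝ → ℝ := fun l s => ∫ z, iteratedDeriv (2 * l) F (y - s * z) ∂(gaussianReal 0 1)
    with hUdef
  have hU : ∀ l ≤ K, ∀ s, HasDerivAt (U l) (s * U (l + 1) s) s := fun l hl s =>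
    aux_deriv_s _ (iteratedDeriv (2 * l + 1) F) (iteratedDeriv (2 * (l + 1)) F) L
      (hd (2 * l) (by omega)) (hd (2 * l + 1) (by omega)) (hc _ (by omega)) (hb _ (by omega))
      (hb _ (by omega)) (hb _ (by omega)) y s
  have hUb : ∀ s, |U (K + 1) s| ≤ L := fun s => aux_bound _ L (hb _ (by omega)) y s
  have hsum : ∑ l ∈ Finset.range (K + 1),
      (-1 : ℝ) ^ l * η ^ l / (l.factorial : ℝ) * iteratedDeriv (2 * l) G y
      = ∑ l ∈ Finset.range (K + 1),
        (-1 : ℝ) ^ l * (σ ^ 2 / 2) ^ l / (l.factorial : ℝ) * U l σ := by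
    refine Finset.sum_congr rfl fun l hl => ?_
    rw [Finset.mem_range] at hl
    rw [hGd (2 * l) (by omega), ← hησ]
  have h0 : F y = ∑ l ∈ Finset.range (K + 1),
        (-1 : ℝ) ^ l * ((0 : ℝ) ^ 2 / 2) ^ l / (l.factorial : ℝ) * U l 0 := by
    rw [Finset.sum_range_succ']
    simp [hUdef]
  rw [hsum, h0, ← Real.norm_eq_abs]
  have key := Convex.norm_image_sub_le_of_norm_hasDerivWithin_le (s := Metric.closedBall (0 : ℝ) |σ|)
    (f := fun s => ∑ l ∈ Finset.range (K + 1),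
        (-1 : ℝ) ^ l * (s ^ 2 / 2) ^ l / (l.factorial : ℝ) * U l s)
    (C := η ^ K / K.factorial * (|σ| * L)) (x := σ) (y := 0)
    (fun s _ => (aux_sum U K hU s).hasDerivWithinAt) (fun s hs => ?_)
    (convex_closedBall _ _) (by simp) (by simp)
  · refine key.trans (le_of_eq ?_)
    have h2 : |σ| * |σ| = 2 * η := by rw [abs_mul_abs_self, hησ]; ring
    rw [zero_sub, norm_neg, Real.norm_eq_abs]
    calc η ^ K / K.factorial * (|σ| * L) * |σ| = η ^ K / K.factorial * L * (|σ| * |σ|) := by ring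
      _ = _ := by rw [h2]; ring
  · have hs' : |s| ≤ |σ| := by simpa using hs
    have hs2 : s ^ 2 / 2 ≤ η := by
      rw [hησ]; have := sq_le_sq.2 hs'; linarith
    rw [norm_mul, norm_mul, norm_div, norm_mul, norm_pow, norm_pow, norm_neg, norm_one, one_pow,
      one_mul, Real.norm_of_nonneg (by positivity : 0 ≤ s ^ 2 / 2),
      Real.norm_of_nonneg (by positivity : 0 ≤ (K.factorial : ℝ))]
    have := hUb s
    simp only [Real.norm_eq_abs]
    gcongr
end
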